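/- arXiv:1104.1219 — 5 statements merged into one kernel-verified Lean document; each statement's English description precedes it below -/
import Mathlib

section
/- Let f and g be random variables taking values in the space of continuous functions on [0,1] × ℝ, such that with probability one f(s,u) = 0 and g(s,u) = 0 whenever |u| > 2. Suppose that for every finite family (s₁, k₁), …, (s_r, k_r) with s_j ∈ [0,1] and integers k_j ≥ 0, the random vectors (∫_ℝ u^{k_j} f(s_j, u) du)_{j=1}^r and (∫_ℝ u^{k_j} g(s_j, u) du)_{j=1}^r have the same distribution. Then f and g have the same distribution. -/
open MeasureTheory ProbabilityTheory

/-!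
A continuous compactly supported function `h` on the line is a *measurable* function of its moments
`∫ u ^ k * h u`. If `h` vanishes outside `[-R, R]` and `|x| < R`, then `h x` is the limit of the
integrals of `h` against polynomial kernels concentrating at `x`, and each of these integrals is a
finite linear combination of moments. Letting `R → ∞` afterwards removes the dependence on the
support. Applied to all slices `u ↦ f (s, u)`, this shows that `f` is almost surely the image of its
moment process under a fixed measurable map, so that the law of the moment process, hence its
finite-dimensional marginals, determine the law of `f`.
-/

open Filter Polynomial Set Topology

section MomentInversion

variable {h : ℝ → ℝ} {R x : ℝ}

lemma hasCompactSupport_of_forall_lt_abs (h0 : ∀ u, R < |u| → h u = 0) :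
    HasCompactSupport h :=
  .intro (isCompact_closedBall 0 R) fun u hu =>
    h0 u (by simpa only [mem_closedBall_zero_iff, not_le, Real.norm_eq_abs] using hu)

/-- The sequence of moments of the function `h` with respect to Lebesgue measure. -/
noncomputable def momentSeq (h : ℝ → ℝ) (k : ℕ) : ℝ := ∫ u, u ^ k * h u

/-- The Riesz functional of a sequence `m`: the linear functional on polynomials that sends `X ^ k`
to `m k`. -/
noncomputable def rieszFunctional (m : ℕ → ℝ) (p : ℝ[X]) : ℝ := p.sum fun k a => a * m k

/-- The Landau kernel on `[-R, R]` centred at `x`: the polynomial `((2 * R) ^ 2 - (v - x) ^ 2) ^ n`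
in `v`, normalized to have integral `1` over `[-R, R]`. -/
noncomputable def landauKernel (R x : ℝ) (n : ℕ) : ℝ[X] :=
  C (∫ v in Icc (-R) R, ((2 * R) ^ 2 - (v - x) ^ 2) ^ n)⁻¹ * (C ((2 * R) ^ 2) - (X - C x) ^ 2) ^ n

lemma rieszFunctional_momentSeq (hint : ∀ k : ℕ, Integrable fun u => u ^ k * h u) (p : ℝ[X]) :
    rieszFunctional (momentSeq h) p = ∫ u, p.eval u * h u := by
  simp only [rieszFunctional, momentSeq, eval_eq_sum, Polynomial.sum, Finset.sum_mul, mul_assoc]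
  rw [integral_finsetSum _ fun k _ => (hint k).const_mul _]
  simp only [integral_const_mul]

lemma tendsto_setIntegral_landauKernel_mul (hx : |x| < R) (hh : ContinuousOn h (Icc (-R) R)) :
    Tendsto (fun n => ∫ v in Icc (-R) R, (landauKernel R x n).eval v * h v) atTop (𝓝 (h x)) := by
  obtain ⟨hRx, hxR⟩ := abs_lt.1 hx
  have peak_unique_max : ∀ y ∈ Icc (-R) R, y ≠ x →
      (2 * R) ^ 2 - (y - x) ^ 2 < (2 * R) ^ 2 - (x - x) ^ 2 := by
    intro y _ hyx
    have := pow_pos (abs_pos.2 (sub_ne_zero.2 hyx)) 2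
    rw [sq_abs] at this
    linarith
  have peak_nonneg : ∀ y ∈ Icc (-R) R, 0 ≤ (2 * R) ^ 2 - (y - x) ^ 2 := by
    rintro y ⟨hRy, hyR⟩
    exact sub_nonneg.2 (sq_le_sq' (by linarith) (by linarith))
  have peak_pos : 0 < (2 * R) ^ 2 - (x - x) ^ 2 := by
    have : 0 < R := (abs_nonneg x).trans_lt hx
    rw [sub_self, zero_pow two_ne_zero, sub_zero]
    positivity
  have x_mem : x ∈ closure (interior (Icc (-R) R)) := by
    rw [interior_Icc]
    exact subset_closure ⟨hRx, hxR⟩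
  refine (tendsto_setIntegral_pow_smul_of_unique_maximum_of_isCompact_of_continuousOn
    (μ := volume) isCompact_Icc (c := fun v => (2 * R) ^ 2 - (v - x) ^ 2) (by fun_prop)
    peak_unique_max peak_nonneg peak_pos x_mem hh).congr fun n => ?_
  simp [landauKernel, mul_assoc, integral_const_mul]

lemma tendsto_rieszFunctional_landauKernel (hx : |x| < R) (hh : Continuous h)
    (hsupp : tsupport h ⊆ Icc (-R) R) :
    Tendsto (fun n => rieszFunctional (momentSeq h) (landauKernel R x n)) atTop (𝓝 (h x)) := by
  have hcs : HasCompactSupport h := isCompact_Icc.of_isClosed_subset (isClosed_tsupport h) hsupp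
  have hint (k : ℕ) : Integrable fun u => u ^ k * h u :=
    Continuous.integrable_of_hasCompactSupport (by fun_prop) hcs.mul_left
  refine (tendsto_setIntegral_landauKernel_mul hx hh.continuousOn).congr fun n => ?_
  rw [rieszFunctional_momentSeq hint]
  refine setIntegral_eq_integral_of_forall_compl_eq_zero fun v hv => ?_
  rw [image_eq_zero_of_notMem_tsupport fun hv' => hv (hsupp hv'), mul_zero]

/-- Reconstruction of a continuous compactly supported function from its sequence of moments `m`.
Upper limits, rather than limits, make this a measurable function of an arbitrary sequence `m`. -/
noncomputable def momentInversion (m : ℕ → ℝ) (x : ℝ) : ℝ :=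
  limsup (fun N : ℕ => limsup (fun n => rieszFunctional m (landauKernel N x n)) atTop) atTop

lemma momentInversion_momentSeq (hh : Continuous h) (hcs : HasCompactSupport h) :
    momentInversion (momentSeq h) = h := by
  funext x
  obtain ⟨r, hr⟩ := hcs.isCompact.isBounded.subset_closedBall 0
  rw [Real.closedBall_eq_Icc, zero_sub, zero_add] at hr
  refine Tendsto.limsup_eq (tendsto_const_nhds.congr' ?_)
  filter_upwards [tendsto_natCast_atTop_atTop.eventually_ge_atTop r,
    tendsto_natCast_atTop_atTop.eventually_gt_atTop |x|] with N hrN hxN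
  exact (tendsto_rieszFunctional_landauKernel hxN hh
    (hr.trans (Icc_subset_Icc (neg_le_neg hrN) hrN))).limsup_eq.symm

lemma measurable_rieszFunctional (p : ℝ[X]) : Measurable fun m => rieszFunctional m p :=
  Finset.measurable_fun_sum _ fun k _ => (measurable_pi_apply k).const_mul _

lemma measurable_momentInversion : Measurable momentInversion :=
  measurable_pi_lambda _ fun _ =>
    .limsup fun _ => .limsup fun _ => measurable_rieszFunctional _

end MomentInversion

section Law

variable {Ω Ω' S : Type*} [MeasurableSpace Ω] [MeasurableSpace Ω'] {μ : Measure Ω} {ν : Measure Ω'}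

lemma map_eq_of_forall_fin_map_eq [IsFiniteMeasure μ] {ι E : Type*} [MeasurableSpace E]
    {X : Ω → ι → E} {Y : Ω' → ι → E} (hX : Measurable X) (hY : Measurable Y)
    (hXY : ∀ (r : ℕ) (i : Fin r → ι), μ.map (fun ω j => X ω (i j)) = ν.map (fun ω j => Y ω (i j))) :
    μ.map X = ν.map Y := by
  have map_restrict_eq (I : Finset ι) :
      μ.map (fun ω => I.restrict (X ω)) = ν.map (fun ω => I.restrict (Y ω)) := by
    have hreindex : Measurable fun (y : Fin I.card → E) (i : I) => y (I.equivFin i) := by fun_prop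
    have := congrArg (Measure.map fun y i => y (I.equivFin i))
      (hXY I.card fun j => (I.equivFin.symm j : ι))
    rw [Measure.map_map hreindex (by fun_prop), Measure.map_map hreindex (by fun_prop)] at this
    simpa only [Function.comp_def, Equiv.symm_apply_apply, Finset.restrict_def] using this
  have hXlim := isProjectiveLimit_map (X := fun i ω => X ω i) hX.aemeasurable (P := μ)
  have hYlim := isProjectiveLimit_map (X := fun i ω => Y ω i) hY.aemeasurable (P := ν)
  simp_rw [← map_restrict_eq] at hYlim
  exact hXlim.unique hYlim

/-- The moments of all the slices `F (s, ·)` of a function on `S × ℝ`. -/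
noncomputable def sliceMoments (F : S × ℝ → ℝ) (p : S × ℕ) : ℝ :=
  momentSeq (fun u => F (p.1, u)) p.2

/-- Reconstruction of a function on `S × ℝ` from the moments of its slices. -/
noncomputable def sliceMomentInversion (m : S × ℕ → ℝ) (p : S × ℝ) : ℝ :=
  momentInversion (fun k => m (p.1, k)) p.2

lemma sliceMomentInversion_sliceMoments {F : S × ℝ → ℝ} (hF : ∀ s, Continuous fun u => F (s, u))
    (hcs : ∀ s, HasCompactSupport fun u => F (s, u)) :
    sliceMomentInversion (sliceMoments F) = F :=
  funext fun p => congrFun (momentInversion_momentSeq (hF p.1) (hcs p.1)) p.2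

lemma measurable_sliceMomentInversion :
    Measurable (sliceMomentInversion : (S × ℕ → ℝ) → S × ℝ → ℝ) :=
  measurable_pi_lambda _ fun p =>
    (measurable_pi_apply p.2).comp (measurable_momentInversion.comp (by fun_prop))

lemma measurable_momentSeq_comp {H : Ω → ℝ → ℝ} (hH : Measurable H) (hc : ∀ ω, Continuous (H ω))
    (k : ℕ) : Measurable fun ω => momentSeq (H ω) k := by
  have hjoint : StronglyMeasurable (Function.uncurry fun (u : ℝ) ω => u ^ k * H ω u) :=
    stronglyMeasurable_uncurry_of_continuous_of_stronglyMeasurable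
      (fun ω => (continuous_pow k).mul (hc ω))
      fun u => (((measurable_pi_apply u).comp hH).const_mul _).stronglyMeasurable
  exact hjoint.integral_prod_left.measurable

lemma measurable_sliceMoments_comp {f : Ω → S × ℝ → ℝ} (hf : Measurable f)
    (hc : ∀ ω s, Continuous fun u => f ω (s, u)) : Measurable fun ω => sliceMoments (f ω) :=
  measurable_pi_lambda _ fun p => measurable_momentSeq_comp (by fun_prop) (fun ω => hc ω p.1) p.2

lemma map_sliceMomentInversion_map_sliceMoments {f : Ω → S × ℝ → ℝ} (hf : Measurable f)
    (hc : ∀ ω s, Continuous fun u => f ω (s, u))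
    (hcs : ∀ᵐ ω ∂μ, ∀ s, HasCompactSupport fun u => f ω (s, u)) :
    (μ.map fun ω => sliceMoments (f ω)).map sliceMomentInversion = μ.map f := by
  rw [Measure.map_map measurable_sliceMomentInversion (measurable_sliceMoments_comp hf hc)]
  refine Measure.map_congr ?_
  filter_upwards [hcs] with ω hω using sliceMomentInversion_sliceMoments (hc ω) hω

theorem stmt_7_general [IsFiniteMeasure μ] {f : Ω → S × ℝ → ℝ} {g : Ω' → S × ℝ → ℝ}
    (hf : Measurable f) (hg : Measurable g)
    (hfc : ∀ ω s, Continuous fun u => f ω (s, u)) (hgc : ∀ ω s, Continuous fun u => g ω (s, u))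
    (hfcs : ∀ᵐ ω ∂μ, ∀ s, HasCompactSupport fun u => f ω (s, u))
    (hgcs : ∀ᵐ ω ∂ν, ∀ s, HasCompactSupport fun u => g ω (s, u))
    (hmom : ∀ (r : ℕ) (s : Fin r → S) (k : Fin r → ℕ),
      μ.map (fun ω j => ∫ u : ℝ, u ^ k j * f ω (s j, u)) =
        ν.map (fun ω j => ∫ u : ℝ, u ^ k j * g ω (s j, u))) :
    μ.map f = ν.map g := by
  rw [← map_sliceMomentInversion_map_sliceMoments hf hfc hfcs,
    ← map_sliceMomentInversion_map_sliceMoments hg hgc hgcs,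
    map_eq_of_forall_fin_map_eq (measurable_sliceMoments_comp hf hfc)
      (measurable_sliceMoments_comp hg hgc)
      fun r i => hmom r (fun j => (i j).1) fun j => (i j).2]

end Law

/-- Two random continuous functions on `[0,1] × ℝ`, almost surely vanishing for `|u| > 2`,
whose processes of moments `(∫_ℝ u^k f(s, u) du)_{s, k}` have the same finite-dimensional
distributions, have the same distribution. -/
theorem stmt_7
    {Ω : Type*} [MeasureSpace Ω] [IsProbabilityMeasure (ℙ : Measure Ω)]
    (f g : Ω → (Set.Icc (0 : ℝ) 1 × ℝ) → ℝ)
    (hfmeas : Measurable f) (hgmeas : Measurable g)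
    -- `f` and `g` take values in the continuous functions on `[0,1] × ℝ`
    (hfc : ∀ ω, Continuous (f ω)) (hgc : ∀ ω, Continuous (g ω))
    -- with probability one, `f(s, u) = 0` and `g(s, u) = 0` whenever `|u| > 2`
    (hf0 : ∀ᵐ ω ∂ℙ, ∀ (s : Set.Icc (0 : ℝ) 1) (u : ℝ), 2 < |u| → f ω (s, u) = 0)
    (hg0 : ∀ᵐ ω ∂ℙ, ∀ (s : Set.Icc (0 : ℝ) 1) (u : ℝ), 2 < |u| → g ω (s, u) = 0)
    -- the finite-dimensional marginals of the moment processes coincide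
    (hmom : ∀ (r : ℕ) (s : Fin r → Set.Icc (0 : ℝ) 1) (k : Fin r → ℕ),
      Measure.map (fun ω => fun j : Fin r => ∫ u : ℝ, u ^ (k j) * f ω (s j, u)) ℙ =
        Measure.map (fun ω => fun j : Fin r => ∫ u : ℝ, u ^ (k j) * g ω (s j, u)) ℙ) :
    Measure.map f ℙ = Measure.map g ℙ := by
  exact stmt_7_general hfmeas hgmeas
    (fun ω s => (hfc ω).comp (.prodMk_right s)) (fun ω s => (hgc ω).comp (.prodMk_right s))
    (hf0.mono fun ω hω s => hasCompactSupport_of_forall_lt_abs (hω s))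
    (hg0.mono fun ω hω s => hasCompactSupport_of_forall_lt_abs (hω s)) hmom
end

section
/- Let f be a random variable taking values in the space of continuous functions on [0,1] × ℝ, such that with probability one f(s,u) = 0 whenever |u| > 2. Suppose that for every finite family (s₁, k₁), …, (s_r, k_r) with s_j ∈ [0,1] and integers k_j ≥ 0 and all reals a₁, …, a_r, the random variable ∑_{j=1}^r a_j ∫_ℝ u^{k_j} f(s_j, u) du is a centered real Gaussian random variable (possibly degenerate, i.e. almost surely 0). Then for every finite family (s₁,u₁), …, (s_r,u_r) ∈ [0,1] × ℝ and all reals b₁, …, b_r, the random variable ∑_{j=1}^r b_j f(s_j, u_j) is a centered real Gaussian random variable (possibly degenerate). -/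
open MeasureTheory ProbabilityTheory

/-- A real random variable `Z` is centered Gaussian (possibly degenerate) if its law is
`N(0, v)` for some `v ≥ 0` (with `N(0,0)` the Dirac mass at `0`). -/
def IsCenteredGaussianRV {Ω : Type*} [MeasureSpace Ω] (Z : Ω → ℝ) : Prop :=
  ∃ v : NNReal, Measure.map Z ℙ = ProbabilityTheory.gaussianReal 0 v

/-!
Mollifying and then applying Weierstrass' theorem on a compact interval containing the supports
gives polynomials `p n`, not depending on `ω`, with `∫ p n (y) f(s, y) dy → f(s, u)` almost surely.
Each of these integrals is a linear combination of moments, so every linear combination of point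
evaluations is an almost sure limit of linear combinations of moments. It remains to see that the
centered Gaussian laws are closed under weak limits: if the laws `N(0, v n)` converge weakly, then
at some `t ≠ 0` their characteristic functions `exp (-v n * t ^ 2 / 2)` have a nonzero limit, hence
the variances `v n` converge, and the limit law is `N(0, lim v n)`.
-/

section

open Filter Topology Polynomial
open scoped NNReal

section WeakLimits

lemma exists_ne_zero_charFun_ne_zero {E : Type*} [NormedAddCommGroup E] [InnerProductSpace ℝ E]
    [Nontrivial E] [MeasurableSpace E] [BorelSpace E] [SecondCountableTopology E]
    (μ : Measure E) [IsFiniteMeasure μ] [NeZero μ] :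
    ∃ t ≠ 0, charFun μ t ≠ 0 := by
  have : (𝓝[≠] (0 : E)).NeBot := Module.punctured_nhds_neBot ℝ E 0
  have ne_zero_near : ∀ᶠ t in 𝓝[≠] (0 : E), charFun μ t ≠ 0 :=
    (continuous_charFun.continuousAt.eventually_ne (by simp [measureReal_univ_ne_zero])).filter_mono
      nhdsWithin_le_nhds
  have off_zero : ∀ᶠ t in 𝓝[≠] (0 : E), t ≠ 0 := self_mem_nhdsWithin
  exact (off_zero.and ne_zero_near).exists

lemma norm_charFun_gaussianReal (m : ℝ) (v : ℝ≥0) (t : ℝ) :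
    ‖charFun (gaussianReal m v) t‖ = Real.exp (-(v * t ^ 2 / 2)) := by
  rw [charFun_gaussianReal, Complex.norm_exp]
  congr 1
  simp [← Complex.ofReal_pow]

lemma exists_tendsto_variance_of_tendsto_charFun_gaussianReal {ι : Type*} {l : Filter ι} [l.NeBot]
    {m : ι → ℝ} {v : ι → ℝ≥0} {t : ℝ} (ht : t ≠ 0) {z : ℂ} (hz : z ≠ 0)
    (hlim : Tendsto (fun i => charFun (gaussianReal (m i) (v i)) t) l (𝓝 z)) :
    ∃ w, Tendsto v l (𝓝 w) := by
  have log_tendsto : Tendsto (fun i => -(v i * t ^ 2 / 2)) l (𝓝 (Real.log ‖z‖)) := by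
    simpa only [norm_charFun_gaussianReal, Real.log_exp] using
      hlim.norm.log (norm_ne_zero_iff.2 hz)
  have coe_tendsto : Tendsto (fun i => (v i : ℝ)) l (𝓝 (Real.log ‖z‖ * (-2 / t ^ 2))) :=
    (log_tendsto.mul_const _).congr fun i => by field_simp
  exact ⟨_, tendsto_real_toNNReal coe_tendsto |>.congr fun i => Real.toNNReal_coe⟩

lemma continuous_charFun_gaussianReal_variance (m t : ℝ) :
    Continuous fun v : ℝ≥0 => charFun (gaussianReal m v) t := by
  simp only [charFun_gaussianReal]
  fun_prop

theorem isClosed_setOf_eq_gaussianReal_zero :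
    IsClosed {μ : ProbabilityMeasure ℝ | ∃ v, (μ : Measure ℝ) = gaussianReal 0 v} := by
  refine IsSeqClosed.isClosed fun μ ν hμ hlim => ?_
  choose v hv using hμ
  have charFun_tendsto : ∀ t, Tendsto (fun n => charFun (gaussianReal 0 (v n)) t) atTop
      (𝓝 (charFun ν t)) := by
    simpa only [hv] using ProbabilityMeasure.tendsto_iff_tendsto_charFun.1 hlim
  obtain ⟨t, ht, hνt⟩ := exists_ne_zero_charFun_ne_zero (ν : Measure ℝ)
  obtain ⟨w, hw⟩ :=
    exists_tendsto_variance_of_tendsto_charFun_gaussianReal ht hνt (charFun_tendsto t)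
  exact ⟨w, Measure.ext_of_charFun <| funext fun t => tendsto_nhds_unique (charFun_tendsto t)
    ((continuous_charFun_gaussianReal_variance 0 t).tendsto w |>.comp hw)⟩

end WeakLimits

section GaussianFamilies

variable {Ω : Type*} [MeasureSpace Ω]

lemma IsCenteredGaussianRV.isProbabilityMeasure {Z : Ω → ℝ} (hZ : IsCenteredGaussianRV Z) :
    IsProbabilityMeasure (ℙ : Measure Ω) := by
  obtain ⟨v, hv⟩ := hZ
  have : IsProbabilityMeasure (Measure.map Z ℙ) := hv ▸ inferInstance
  exact Measure.isProbabilityMeasure_of_map Z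

lemma IsCenteredGaussianRV.aemeasurable {Z : Ω → ℝ} (hZ : IsCenteredGaussianRV Z) :
    AEMeasurable Z ℙ := by
  obtain ⟨v, hv⟩ := hZ
  exact .of_map_ne_zero (hv ▸ IsProbabilityMeasure.ne_zero _)

theorem IsCenteredGaussianRV.of_tendsto_ae {ι : Type*} {l : Filter ι} [l.NeBot]
    [l.IsCountablyGenerated] {Z : ι → Ω → ℝ} {Y : Ω → ℝ} (hZ : ∀ i, IsCenteredGaussianRV (Z i))
    (hlim : ∀ᵐ ω, Tendsto (fun i => Z i ω) l (𝓝 (Y ω))) :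
    IsCenteredGaussianRV Y := by
  obtain ⟨i⟩ := l.nonempty_of_neBot
  have := (hZ i).isProbabilityMeasure
  have hZm : ∀ i, AEMeasurable (Z i) ℙ := fun i => (hZ i).aemeasurable
  have hYm : AEMeasurable Y ℙ := aemeasurable_of_tendsto_metrizable_ae l hZm hlim
  exact isClosed_setOf_eq_gaussianReal_zero.mem_of_tendsto
    (tendstoInDistribution_of_ae_tendsto hZm hYm hlim).tendsto (.of_forall hZ)

/-- A family of real random variables is centered Gaussian if its linear span is a Gaussian space,
i.e. consists of centered Gaussian variables. The span is taken among functions, not among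
almost-everywhere classes. -/
def IsCenteredGaussianFamily {ι : Type*} (X : ι → Ω → ℝ) : Prop :=
  ∀ Z ∈ Submodule.span ℝ (Set.range X), IsCenteredGaussianRV Z

lemma isCenteredGaussianFamily_iff {ι : Type*} {X : ι → Ω → ℝ} :
    IsCenteredGaussianFamily X ↔ ∀ (r : ℕ) (i : Fin r → ι) (a : Fin r → ℝ),
      IsCenteredGaussianRV fun ω => ∑ j, a j * X (i j) ω := by
  have sum_eq {r : ℕ} (i : Fin r → ι) (a : Fin r → ℝ) :
      (fun ω => ∑ j, a j * X (i j) ω) = ∑ j, a j • X (i j) := by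
    ext ω
    simp
  simp only [sum_eq]
  constructor
  · intro hX r i a
    exact hX _ (Submodule.sum_smul_mem _ _ fun j _ => Submodule.subset_span ⟨i j, rfl⟩)
  · intro hX Z hZ
    obtain ⟨r, a, g, rfl⟩ := Submodule.mem_span_set'.1 hZ
    choose i hi using fun j => (g j).2
    simpa only [hi] using hX r i a

theorem IsCenteredGaussianFamily.of_tendsto_ae {ι κ : Type*} {X : ι → Ω → ℝ} {Y : κ → Ω → ℝ}
    (hX : IsCenteredGaussianFamily X)
    (hY : ∀ k, ∃ Z : ℕ → Ω → ℝ, (∀ n, Z n ∈ Submodule.span ℝ (Set.range X)) ∧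
      ∀ᵐ ω, Tendsto (fun n => Z n ω) atTop (𝓝 (Y k ω))) :
    IsCenteredGaussianFamily Y := by
  intro W hW
  obtain ⟨Z, hZ, hlim⟩ : ∃ Z : ℕ → Ω → ℝ, (∀ n, Z n ∈ Submodule.span ℝ (Set.range X)) ∧
      ∀ᵐ ω, Tendsto (fun n => Z n ω) atTop (𝓝 (W ω)) := by
    induction hW using Submodule.span_induction with
    | mem _ hmem =>
      obtain ⟨k, rfl⟩ := hmem
      exact hY k
    | zero => exact ⟨0, fun _ => zero_mem _, .of_forall fun _ => tendsto_const_nhds⟩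
    | add _ _ _ _ ih₁ ih₂ =>
      obtain ⟨Z₁, hZ₁, hlim₁⟩ := ih₁
      obtain ⟨Z₂, hZ₂, hlim₂⟩ := ih₂
      exact ⟨Z₁ + Z₂, fun n => add_mem (hZ₁ n) (hZ₂ n),
        by filter_upwards [hlim₁, hlim₂] with ω h₁ h₂ using h₁.add h₂⟩
    | smul c _ _ ih =>
      obtain ⟨Z, hZ, hlim⟩ := ih
      exact ⟨c • Z, fun n => Submodule.smul_mem _ c (hZ n),
        by filter_upwards [hlim] with ω h using h.const_mul c⟩
  exact .of_tendsto_ae (fun n => hX _ (hZ n)) hlim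

end GaussianFamilies

section PolynomialApproximation

lemma exists_seq_continuous_tendsto_integral_mul {G : Type*} [NormedAddCommGroup G]
    [NormedSpace ℝ G] [FiniteDimensional ℝ G] [MeasurableSpace G] [BorelSpace G]
    (μ : Measure G) [μ.IsAddHaarMeasure] (x : G) :
    ∃ g : ℕ → G → ℝ, (∀ n, Continuous (g n)) ∧ ∀ h : G → ℝ, Continuous h →
      Tendsto (fun n => ∫ u, g n u * h u ∂μ) atTop (𝓝 (h x)) := by
  let φ (n : ℕ) : ContDiffBump (0 : G) :=
    ⟨1 / ((n : ℝ) + 1) / 2, 1 / ((n : ℝ) + 1), by positivity, half_lt_self (by positivity)⟩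
  refine ⟨fun n u => (φ n).normed μ (x - u), fun n => ?_, fun h hh => ?_⟩
  · exact (φ n).continuous_normed.comp (by fun_prop)
  · refine (ContDiffBump.convolution_tendsto_right_of_continuous (φ := φ) (μ := μ)
      tendsto_one_div_add_atTop_nhds_zero_nat hh x).congr fun n => ?_
    simp only [convolution_lsmul_swap, smul_eq_mul]

lemma tendsto_integral_mul_zero_of_tendstoUniformlyOn {α ι : Type*} [MeasurableSpace α]
    {μ : Measure α} {l : Filter ι} {φ : ι → α → ℝ} {h : α → ℝ} {s : Set α}
    (hφ : TendstoUniformlyOn φ 0 l s) (hh : Integrable h μ) (hs : Function.support h ⊆ s) :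
    Tendsto (fun i => ∫ x, φ i x * h x ∂μ) l (𝓝 0) := by
  rw [NormedAddGroup.tendsto_nhds_zero]
  intro ε hε
  have : 0 ≤ ∫ x, ‖h x‖ ∂μ := by positivity
  set δ := ε / ((∫ x, ‖h x‖ ∂μ) + 1)
  filter_upwards [Metric.tendstoUniformlyOn_iff.1 hφ δ (by positivity)] with i hi
  have pointwise_bound (x : α) : ‖φ i x * h x‖ ≤ δ * ‖h x‖ := by
    by_cases hx : h x = 0
    · simp [hx]
    · rw [norm_mul]
      gcongr
      simpa using (hi x (hs hx)).le
  calc ‖∫ x, φ i x * h x ∂μ‖ ≤ ∫ x, δ * ‖h x‖ ∂μ :=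
        norm_integral_le_of_norm_le (hh.norm.const_mul δ) (.of_forall pointwise_bound)
    _ = δ * ∫ x, ‖h x‖ ∂μ := integral_const_mul _ _
    _ < δ * ((∫ x, ‖h x‖ ∂μ) + 1) := by gcongr; linarith
    _ = ε := div_mul_cancel₀ _ (by positivity)

lemma exists_seq_polynomial_tendstoUniformlyOn_sub {a b : ℝ} {g : ℕ → ℝ → ℝ}
    (hg : ∀ n, ContinuousOn (g n) (Set.Icc a b)) :
    ∃ p : ℕ → ℝ[X],
      TendstoUniformlyOn (fun n u => (p n).eval u - g n u) 0 atTop (Set.Icc a b) := by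
  choose p hp using fun n : ℕ =>
    exists_polynomial_near_of_continuousOn a b (g n) (hg n) (1 / ((n : ℝ) + 1)) (by positivity)
  refine ⟨p, Metric.tendstoUniformlyOn_iff.2 fun ε hε => ?_⟩
  filter_upwards [tendsto_one_div_add_atTop_nhds_zero_nat.eventually_lt_const hε] with n hn u hu
  simpa [Real.dist_eq, abs_sub_comm] using (hp n u hu).trans hn

lemma integrable_mul_of_support_subset_isCompact {α : Type*} [TopologicalSpace α] [R1Space α]
    [MeasurableSpace α] [OpensMeasurableSpace α] {μ : Measure α} [IsFiniteMeasureOnCompacts μ]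
    {K : Set α} (hK : IsCompact K) {q h : α → ℝ} (hq : Continuous q) (hh : Continuous h)
    (hs : Function.support h ⊆ K) :
    Integrable (fun x => q x * h x) μ :=
  (hq.mul hh).integrable_of_hasCompactSupport
    (HasCompactSupport.of_support_subset_isCompact hK hs).mul_left

theorem exists_seq_polynomial_tendsto_integral_mul (a b x : ℝ) :
    ∃ p : ℕ → ℝ[X], ∀ h : ℝ → ℝ, Continuous h → Function.support h ⊆ Set.Icc a b →
      Tendsto (fun n => ∫ u, (p n).eval u * h u) atTop (𝓝 (h x)) := by
  obtain ⟨g, hg, g_tendsto⟩ := exists_seq_continuous_tendsto_integral_mul volume x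
  obtain ⟨p, hp⟩ :=
    exists_seq_polynomial_tendstoUniformlyOn_sub (a := a) (b := b) fun n => (hg n).continuousOn
  refine ⟨p, fun h hh hs => ?_⟩
  have integrable_mul {q : ℝ → ℝ} (hq : Continuous q) : Integrable fun u => q u * h u :=
    integrable_mul_of_support_subset_isCompact isCompact_Icc hq hh hs
  have hh_int : Integrable h := by simpa using integrable_mul continuous_one
  have error_tendsto := tendsto_integral_mul_zero_of_tendstoUniformlyOn hp hh_int hs
  refine (zero_add (h x) ▸ error_tendsto.add (g_tendsto h hh)).congr fun n => ?_
  simp only [sub_mul]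
  rw [integral_sub (integrable_mul (p n).continuous) (integrable_mul (hg n)), sub_add_cancel]

lemma integral_eval_mul_eq_sum_moments {μ : Measure ℝ} {p : ℝ[X]} {h : ℝ → ℝ}
    (hh : ∀ k ∈ p.support, Integrable (fun u => u ^ k * h u) μ) :
    ∫ u, p.eval u * h u ∂μ = p.sum fun k c => c * ∫ u, u ^ k * h u ∂μ := by
  simp only [eval_eq_sum, Polynomial.sum_def, Finset.sum_mul, mul_assoc]
  rw [integral_finsetSum _ fun k hk => (hh k hk).const_mul _]
  simp only [integral_const_mul]

end PolynomialApproximation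

theorem stmt_8_general {Ω S : Type*} [MeasureSpace Ω] (f : Ω → S × ℝ → ℝ) (R : S → ℝ)
    (hfc : ∀ s, ∀ᵐ ω, Continuous fun u => f ω (s, u))
    (hf0 : ∀ s, ∀ᵐ ω, ∀ u, R s < |u| → f ω (s, u) = 0)
    (hmom : ∀ (r : ℕ) (s : Fin r → S) (k : Fin r → ℕ) (a : Fin r → ℝ),
      IsCenteredGaussianRV fun ω => ∑ j, a j * ∫ u : ℝ, u ^ k j * f ω (s j, u))
    (r : ℕ) (pt : Fin r → S × ℝ) (b : Fin r → ℝ) :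
    IsCenteredGaussianRV fun ω => ∑ j, b j * f ω (pt j) := by
  let moment (i : S × ℕ) (ω : Ω) : ℝ := ∫ u, u ^ i.2 * f ω (i.1, u)
  have moment_gaussian : IsCenteredGaussianFamily moment :=
    isCenteredGaussianFamily_iff.2 fun r i => hmom r (fun j => (i j).1) (fun j => (i j).2)
  suffices IsCenteredGaussianFamily fun pt ω => f ω pt from
    isCenteredGaussianFamily_iff.1 this r pt b
  refine moment_gaussian.of_tendsto_ae fun ⟨s, x⟩ => ?_
  obtain ⟨p, hp⟩ := exists_seq_polynomial_tendsto_integral_mul (-R s) (R s) x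
  refine ⟨fun n => (p n).sum fun k c => c • moment (s, k), fun n => ?_, ?_⟩
  · exact Submodule.sum_smul_mem _ _ fun k _ => Submodule.subset_span ⟨(s, k), rfl⟩
  · filter_upwards [hfc s, hf0 s] with ω hc h0
    have support_subset : Function.support (fun u => f ω (s, u)) ⊆ Set.Icc (-R s) (R s) :=
      fun u hu => abs_le.1 (not_lt.1 (mt (h0 u) hu))
    refine (hp _ hc support_subset).congr fun n => ?_
    rw [integral_eval_mul_eq_sum_moments fun k _ =>
      integrable_mul_of_support_subset_isCompact isCompact_Icc (continuous_pow k) hc support_subset]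
    simp [Polynomial.sum_def, moment]

end

/-- If `f` is a random continuous function on `[0,1] × ℝ`, almost surely vanishing for
`|u| > 2`, such that all finite linear combinations of the moment variables
`∫_ℝ u^k f(s, u) du` are centered Gaussian, then all finite linear combinations of the
point evaluations `f(s, u)` are centered Gaussian. -/
theorem stmt_8
    {Ω : Type*} [MeasureSpace Ω] [IsProbabilityMeasure (ℙ : Measure Ω)]
    (f : Ω → (Set.Icc (0 : ℝ) 1 × ℝ) → ℝ)
    (hfmeas : Measurable f)
    -- `f` takes values in the continuous functions on `[0,1] × ℝ`
    (hfc : ∀ ω, Continuous (f ω))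
    -- with probability one, `f(s, u) = 0` whenever `|u| > 2`
    (hf0 : ∀ᵐ ω ∂ℙ, ∀ (s : Set.Icc (0 : ℝ) 1) (u : ℝ), 2 < |u| → f ω (s, u) = 0)
    -- every finite linear combination of the moment variables is centered Gaussian
    (hmom : ∀ (r : ℕ) (s : Fin r → Set.Icc (0 : ℝ) 1) (k : Fin r → ℕ) (a : Fin r → ℝ),
      IsCenteredGaussianRV
        (fun ω => ∑ j : Fin r, a j * ∫ u : ℝ, u ^ (k j) * f ω (s j, u))) :
    -- then every finite linear combination of point evaluations of `f` is centered Gaussian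
    ∀ (r : ℕ) (pt : Fin r → Set.Icc (0 : ℝ) 1 × ℝ) (b : Fin r → ℝ),
      IsCenteredGaussianRV (fun ω => ∑ j : Fin r, b j * f ω (pt j)) :=
  stmt_8_general f (fun _ => 2) (fun _ => .of_forall fun ω => (hfc ω).comp (by fun_prop))
    (fun s => hf0.mono fun _ h => h s) hmom
end

section
/- Fix an integer p ≥ 1 and integers k₁, …, k_p ≥ 1. Let E be the disjoint union of the sets {0, 1, …, k_ℓ} for ℓ = 1, …, p, writing m̄^ℓ for the element m of the ℓ-th copy. Let π be a partition of E, write π(x) for the block of π containing x, and let G_π be the graph whose vertices are the blocks of π and whose edges are the pairs {π((m−1)̄^ℓ), π(m̄^ℓ)} for 1 ≤ ℓ ≤ p and 1 ≤ m ≤ k_ℓ; for each ℓ, the ℓ-th walk is the sequence of vertices (π(0̄^ℓ), π(1̄^ℓ), …, π(k̄_ℓ^ℓ)). Assume: (i) π(0̄^ℓ) = π(k̄_ℓ^ℓ) for every ℓ; (ii) every edge of G_π is traversed at least twice in total by the p walks; (iii) for every ℓ there exists ℓ' ≠ ℓ such that some edge of G_π is traversed both by the ℓ-th walk and by the ℓ'-th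 walk. Then the number c_π of connected components of G_π satisfies c_π ≤ p/2, and the number |π| of blocks of π satisfies |π| ≤ c_π − p/2 + (k₁ + ⋯ + k_p)/2. -/
/-- The elements of the index set `E = ⨿_ℓ {0, 1, …, k_ℓ}`. -/
abbrev WalkIndex (p : ℕ) (k : Fin p → ℕ) : Type := (ℓ : Fin p) × Fin (k ℓ + 1)

/-- The steps of the `p` walks: the step `(ℓ, m)` goes from `(m-1)^ℓ` to `m^ℓ`
(for `1 ≤ m ≤ k_ℓ`, encoded by `m : Fin (k ℓ)`). -/
abbrev WalkStep (p : ℕ) (k : Fin p → ℕ) : Type := (ℓ : Fin p) × Fin (k ℓ)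

/-- The edge of the graph `G_π` (whose vertices are the blocks of `π`, i.e. the elements of
the quotient of `E` by `π`) traversed by the step `q`. -/
def stepEdge {p : ℕ} {k : Fin p → ℕ} (π : Setoid (WalkIndex p k)) (q : WalkStep p k) :
    Sym2 (Quotient π) :=
  s(Quotient.mk π ⟨q.1, q.2.castSucc⟩, Quotient.mk π ⟨q.1, q.2.succ⟩)

/-- Two vertices of `G_π` are adjacent when some step traverses the edge joining them. -/
def stepAdj {p : ℕ} {k : Fin p → ℕ} (π : Setoid (WalkIndex p k)) (a b : Quotient π) : Prop :=
  ∃ q : WalkStep p k, stepEdge π q = s(a, b)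

/-!
By (iii) every component contains at least two walks, so `2 c_π ≤ p`. For the second inequality,
take a spanning forest `F` of `G_π`; it has at least `|π| - c_π` edges. Discard one step from each
walk in such a way that every edge of `F` is still traversed by two of the `∑ k - p` remaining
steps, which gives `2 |F| ≤ ∑ k - p`. If a walk leaves `F`, discard a step outside `F`; otherwise
discard a step on an edge shared with another walk. Every edge of `F` is a bridge of `F`, so a
closed walk that stays in `F` and crosses an edge crosses it again, and both sharing walks keep a
step on that edge.
-/

section Counting

variable {α β V : Type*}

theorem mul_ncard_le_ncard_of_forall_le_ncard_inter_preimage {f : α → β} {s : Set α} {t : Set β}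
    {n : ℕ} (hs : s.Finite) (h : ∀ b ∈ t, n ≤ (s ∩ f ⁻¹' {b}).ncard) :
    n * t.ncard ≤ s.ncard := by
  classical
  obtain ht | ht := t.finite_or_infinite.symm
  · simp only [ht.ncard, mul_zero, zero_le]
  lift s to Finset α using hs
  lift t to Finset β using ht
  have hfiber (b : β) (hb : b ∈ t) : n ≤ {a ∈ {a ∈ s | f a ∈ t} | f a = b}.card := by
    convert h b hb
    rw [← Set.ncard_coe_finset]
    congr 1
    grind
  rw [Set.ncard_coe_finset, Set.ncard_coe_finset]
  calc n * t.card ≤ {a ∈ s | f a ∈ t}.card :=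
        Finset.mul_card_image_le_card_of_maps_to (fun _ ha ↦ (Finset.mem_filter.1 ha).2) n hfiber
    _ ≤ s.card := Finset.card_filter_le _ _

theorem mapEdgeSet_toSimpleGraph_hom_injective (G : SimpleGraph V) :
    Function.Injective fun e : (C : G.ConnectedComponent) × C.toSimpleGraph.edgeSet ↦
      e.1.toSimpleGraph_hom.mapEdgeSet e.2 := by
  rintro ⟨C, ⟨⟨u, v⟩, huv⟩⟩ ⟨D, ⟨⟨u', v'⟩, huv'⟩⟩ h
  have hedge : s((u : V), (v : V)) = s((u' : V), (v' : V)) := congrArg Subtype.val h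
  obtain rfl : C = D := by
    have hu : (u : V) ∈ s((u' : V), (v' : V)) := hedge ▸ Sym2.mem_mk_left _ _
    obtain hu | hu := Sym2.mem_iff.1 hu
    · exact u.2.symm.trans ((congrArg _ hu).trans u'.2)
    · exact u.2.symm.trans ((congrArg _ hu).trans v'.2)
  exact congrArg (Sigma.mk C)
    (SimpleGraph.Hom.mapEdgeSet.injective C.toSimpleGraph_hom Subtype.val_injective h)

theorem card_vert_le_card_connectedComponent_add_card_edgeSet [Finite V] (G : SimpleGraph V) :
    Nat.card V ≤ Nat.card G.ConnectedComponent + Nat.card G.edgeSet := by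
  have := Fintype.ofFinite G.ConnectedComponent
  calc Nat.card V
      = ∑ C : G.ConnectedComponent, Nat.card C := by
        rw [← Nat.card_sigma]
        exact Nat.card_congr (Equiv.sigmaFiberEquiv G.connectedComponentMk).symm
    _ ≤ ∑ C : G.ConnectedComponent, (Nat.card C.toSimpleGraph.edgeSet + 1) :=
        Finset.sum_le_sum fun C _ ↦ C.connected_toSimpleGraph.card_vert_le_card_edgeSet_add_one
    _ = Nat.card G.ConnectedComponent +
          Nat.card ((C : G.ConnectedComponent) × C.toSimpleGraph.edgeSet) := by
        rw [Nat.card_sigma, Finset.sum_add_distrib, add_comm, Finset.sum_const, smul_eq_mul,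
          mul_one, Finset.card_univ, Nat.card_eq_fintype_card]
    _ ≤ Nat.card G.ConnectedComponent + Nat.card G.edgeSet := by
        gcongr
        exact Nat.card_le_card_of_injective _ (mapEdgeSet_toSimpleGraph_hom_injective G)

theorem eqvGen_toRel_eq_reachable_fromEdgeSet (E : Set (Sym2 V)) :
    Relation.EqvGen (Sym2.ToRel E) = (SimpleGraph.fromEdgeSet E).Reachable := by
  have := Sym2.toRel_symm E
  rw [Relation.EqvGen.eqvGen_eq_reflTransGen,
    SimpleGraph.reachable_fromEdgeSet_eq_reflTransGen_toRel]

end Counting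

section ClosedSequence

variable {V : Type*} {n : ℕ}

theorem reflTransGen_of_forall_castSucc_succ {r : V → V → Prop} {f : Fin (n + 1) → V}
    {i j : Fin (n + 1)} (hij : i ≤ j)
    (h : ∀ l : Fin n, i ≤ l.castSucc → l.castSucc < j → r (f l.castSucc) (f l.succ)) :
    Relation.ReflTransGen r (f i) (f j) := by
  refine (reflTransGen_of_succ_of_le (fun a b ↦ r (f a) (f b)) (fun a ha ↦ ?_) hij).lift f
    fun _ _ ↦ id
  obtain ⟨l, rfl⟩ := Fin.exists_castSucc_eq.2 (ha.2.trans_le (Fin.le_last j)).ne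
  simpa only [Fin.orderSucc_castSucc] using h l ha.1 ha.2

theorem exists_ne_step_eq_of_isBridge {G : SimpleGraph V} {f : Fin (n + 1) → V}
    (hclosed : f 0 = f (Fin.last n)) (hadj : ∀ i : Fin n, G.Adj (f i.castSucc) (f i.succ))
    {m : Fin n} (hm : G.IsBridge s(f m.castSucc, f m.succ)) :
    ∃ i ≠ m, s(f i.castSucc, f i.succ) = s(f m.castSucc, f m.succ) := by
  by_contra! hne
  let H := G.deleteEdges {s(f m.castSucc, f m.succ)}
  have hstep (i : Fin n) (hi : i ≠ m) : H.Adj (f i.castSucc) (f i.succ) :=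
    SimpleGraph.deleteEdges_adj.2 ⟨hadj i, hne i hi⟩
  have hbefore : H.Reachable (f 0) (f m.castSucc) :=
    (H.reachable_iff_reflTransGen _ _).2 <|
      reflTransGen_of_forall_castSucc_succ (Fin.zero_le _) fun i _ hi ↦
        hstep i (Fin.castSucc_lt_castSucc_iff.1 hi).ne
  have hafter : H.Reachable (f m.succ) (f (Fin.last n)) :=
    (H.reachable_iff_reflTransGen _ _).2 <|
      reflTransGen_of_forall_castSucc_succ (Fin.le_last _) fun i hi _ ↦
        hstep i (Fin.succ_le_castSucc_iff.1 hi).ne'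
  exact SimpleGraph.isBridge_iff.1 hm (hbefore.symm.trans (hclosed ▸ hafter.symm))

end ClosedSequence

section WalkFamily

variable {V ι : Type*} {k : ι → ℕ} (w : ∀ i, Fin (k i + 1) → V)

/-- The edge traversed by a step of a family of walks; the step `⟨i, m⟩` goes from the `m`-th to
the `(m + 1)`-th vertex of the `i`-th walk. -/
def traversedEdge (q : (i : ι) × Fin (k i)) : Sym2 V :=
  s(w q.1 q.2.castSucc, w q.1 q.2.succ)

/-- The graph formed by the edges that a family of walks traverses. Loops are dropped, which
changes neither the connected components nor the spanning forests. -/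
def traversedGraph : SimpleGraph V :=
  SimpleGraph.fromEdgeSet (Set.range (traversedEdge w))

/-- A step that its walk can spare when the steps on each edge of a forest `F` are counted: either
it lies outside `F`, or its walk stays in `F` and another walk traverses the same edge. -/
def IsDiscardable (F : SimpleGraph V) (q : (i : ι) × Fin (k i)) : Prop :=
  traversedEdge w q ∈ F.edgeSet →
    (∀ m, traversedEdge w ⟨q.1, m⟩ ∈ F.edgeSet) ∧
      ∃ q', q'.1 ≠ q.1 ∧ traversedEdge w q = traversedEdge w q'

variable {w}

theorem reachable_walk_zero (i : ι) (m : Fin (k i + 1)) :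
    (traversedGraph w).Reachable (w i 0) (w i m) := by
  rw [traversedGraph, SimpleGraph.reachable_fromEdgeSet_eq_reflTransGen_toRel]
  exact reflTransGen_of_forall_castSucc_succ (Fin.zero_le m) fun l _ _ ↦ ⟨⟨i, l⟩, rfl⟩

theorem reachable_of_traversedEdge_eq {i j : ι} {m : Fin (k i)} {m' : Fin (k j)}
    (h : traversedEdge w ⟨i, m⟩ = traversedEdge w ⟨j, m'⟩) :
    (traversedGraph w).Reachable (w i 0) (w j 0) := by
  have hmem : w i m.castSucc ∈ traversedEdge w ⟨j, m'⟩ := h ▸ Sym2.mem_mk_left _ _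
  refine (reachable_walk_zero i m.castSucc).trans (SimpleGraph.Reachable.symm ?_)
  obtain hv | hv := Sym2.mem_iff.1 hmem <;> exact hv ▸ reachable_walk_zero j _

theorem two_mul_card_connectedComponent_le [Finite ι] (hcover : ∀ v, ∃ i m, w i m = v)
    (hshare : ∀ i, ∃ j, j ≠ i ∧ ∃ m m', traversedEdge w ⟨i, m⟩ = traversedEdge w ⟨j, m'⟩) :
    2 * Nat.card (traversedGraph w).ConnectedComponent ≤ Nat.card ι := by
  let component (i : ι) := (traversedGraph w).connectedComponentMk (w i 0)
  have hsurj : Function.Surjective component := by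
    rintro ⟨v⟩
    obtain ⟨i, m, rfl⟩ := hcover v
    exact ⟨i, SimpleGraph.ConnectedComponent.sound (reachable_walk_zero i m)⟩
  have hfiber (C : (traversedGraph w).ConnectedComponent) : 2 ≤ (component ⁻¹' {C}).ncard := by
    obtain ⟨i, rfl⟩ := hsurj C
    obtain ⟨j, hji, m, m', heq⟩ := hshare i
    exact (Set.one_lt_ncard (Set.toFinite _)).2 ⟨i, rfl, j,
      SimpleGraph.ConnectedComponent.sound (reachable_of_traversedEdge_eq heq).symm, hji.symm⟩
  rw [← Set.ncard_univ, ← Set.ncard_univ]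
  refine mul_ncard_le_ncard_of_forall_le_ncard_inter_preimage (f := component)
    Set.finite_univ fun C _ ↦ ?_
  rw [Set.univ_inter]
  exact hfiber C

theorem exists_isDiscardable (F : SimpleGraph V) {i : ι}
    (hshare : ∃ j, j ≠ i ∧ ∃ m m', traversedEdge w ⟨i, m⟩ = traversedEdge w ⟨j, m'⟩) :
    ∃ m, IsDiscardable w F ⟨i, m⟩ := by
  by_cases hstay : ∀ m, traversedEdge w ⟨i, m⟩ ∈ F.edgeSet
  · obtain ⟨j, hji, m, m', heq⟩ := hshare
    exact ⟨m, fun _ ↦ ⟨hstay, ⟨j, m'⟩, hji, heq⟩⟩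
  · obtain ⟨m, hm⟩ := not_forall.1 hstay
    exact ⟨m, fun h ↦ absurd h hm⟩

theorem IsDiscardable.exists_ne_traversedEdge_eq {F : SimpleGraph V} (hF : F.IsAcyclic) {i : ι}
    (hclosed : w i 0 = w i (Fin.last (k i))) {m : Fin (k i)} (hm : IsDiscardable w F ⟨i, m⟩)
    (hmem : traversedEdge w ⟨i, m⟩ ∈ F.edgeSet) :
    ∃ m' ≠ m, traversedEdge w ⟨i, m'⟩ = traversedEdge w ⟨i, m⟩ :=
  exists_ne_step_eq_of_isBridge hclosed (hm hmem).1
    (SimpleGraph.isAcyclic_iff_forall_isBridge.1 hF hmem)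

/-- The steps left after discarding the `z i`-th step of each walk `i`. -/
def retainedSteps (z : ∀ i, Fin (k i)) : Set ((i : ι) × Fin (k i)) :=
  {q | q.2 ≠ z q.1}

theorem ncard_retainedSteps_add_card [Fintype ι] (z : ∀ i, Fin (k i)) :
    (retainedSteps z).ncard + Nat.card ι = ∑ i, k i := by
  have hcompl : (retainedSteps z)ᶜ = Set.range fun i ↦ ⟨i, z i⟩ := by
    ext ⟨i, m⟩
    simp [retainedSteps, eq_comm]
  have hinj : Function.Injective fun i ↦ (⟨i, z i⟩ : (i : ι) × Fin (k i)) :=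
    fun _ _ h ↦ congrArg Sigma.fst h
  rw [← Set.ncard_range_of_injective hinj, ← hcompl, Set.ncard_add_ncard_compl, Nat.card_sigma]
  simp only [Nat.card_fin]

theorem exists_mem_retainedSteps_traversedEdge_eq {F : SimpleGraph V} (hF : F.IsAcyclic)
    (hclosed : ∀ i, w i 0 = w i (Fin.last (k i))) {z : ∀ i, Fin (k i)}
    (hz : ∀ i, IsDiscardable w F ⟨i, z i⟩) {q : (i : ι) × Fin (k i)}
    (hq : traversedEdge w q ∈ F.edgeSet) :
    ∃ r ∈ retainedSteps z, r.1 = q.1 ∧ traversedEdge w r = traversedEdge w q := by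
  obtain ⟨i, m⟩ := q
  obtain rfl | hm := eq_or_ne m (z i)
  · obtain ⟨m', hm', heq⟩ := (hz i).exists_ne_traversedEdge_eq hF (hclosed i) hq
    exact ⟨⟨i, m'⟩, hm', rfl, heq⟩
  · exact ⟨⟨i, m⟩, hm, rfl, rfl⟩

theorem two_le_ncard_retainedSteps_inter_preimage {F : SimpleGraph V} (hF : F.IsAcyclic)
    (hclosed : ∀ i, w i 0 = w i (Fin.last (k i))) {z : ∀ i, Fin (k i)}
    (hz : ∀ i, IsDiscardable w F ⟨i, z i⟩) {e : Sym2 V} (he : e ∈ F.edgeSet)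
    (htwice : 2 ≤ (traversedEdge w ⁻¹' {e}).ncard) :
    2 ≤ (retainedSteps z ∩ traversedEdge w ⁻¹' {e}).ncard := by
  by_cases hdiscard : ∃ i, traversedEdge w ⟨i, z i⟩ = e
  · obtain ⟨i, rfl⟩ := hdiscard
    obtain ⟨-, q, hqi, hq⟩ := hz i he
    obtain ⟨r, hr, hri, hre⟩ := exists_mem_retainedSteps_traversedEdge_eq hF hclosed hz he
    obtain ⟨r', hr', hrq, hre'⟩ := exists_mem_retainedSteps_traversedEdge_eq hF hclosed hz (hq ▸ he)
    have hfinite := (Set.finite_of_ncard_pos (two_pos.trans_le htwice)).subset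
      (Set.inter_subset_right (s := retainedSteps z))
    refine (Set.one_lt_ncard hfinite).2 ⟨r, ⟨hr, hre⟩, r', ⟨hr', hre'.trans hq.symm⟩, ?_⟩
    rintro rfl
    exact hqi (hrq.symm.trans hri)
  · have hsub : traversedEdge w ⁻¹' {e} ⊆ retainedSteps z := by
      intro q hq (hqz : q.2 = z q.1)
      exact hdiscard ⟨q.1, hqz ▸ hq⟩
    rwa [Set.inter_eq_right.2 hsub]

theorem two_mul_card_edgeSet_add_card_le [Fintype ι] {F : SimpleGraph V}
    (hle : F ≤ traversedGraph w) (hF : F.IsAcyclic)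
    (hclosed : ∀ i, w i 0 = w i (Fin.last (k i)))
    (htwice : ∀ q₀, 2 ≤ Nat.card {q // traversedEdge w q = traversedEdge w q₀})
    (hshare : ∀ i, ∃ j, j ≠ i ∧ ∃ m m', traversedEdge w ⟨i, m⟩ = traversedEdge w ⟨j, m'⟩) :
    2 * Nat.card F.edgeSet + Nat.card ι ≤ ∑ i, k i := by
  choose z hz using fun i ↦ exists_isDiscardable F (hshare i)
  have hrange : F.edgeSet ⊆ Set.range (traversedEdge w) := by
    intro e he
    have := SimpleGraph.edgeSet_mono hle he
    rw [traversedGraph, SimpleGraph.edgeSet_fromEdgeSet] at this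
    exact this.1
  have hfiber (e : Sym2 V) (he : e ∈ F.edgeSet) :
      2 ≤ (retainedSteps z ∩ traversedEdge w ⁻¹' {e}).ncard := by
    obtain ⟨q₀, rfl⟩ := hrange he
    exact two_le_ncard_retainedSteps_inter_preimage hF hclosed hz he (htwice q₀)
  rw [Nat.card_coe_set_eq, ← ncard_retainedSteps_add_card z]
  gcongr
  exact mul_ncard_le_ncard_of_forall_le_ncard_inter_preimage (Set.toFinite _) hfiber

theorem two_mul_card_vert_add_card_le [Finite V] [Fintype ι]
    (hclosed : ∀ i, w i 0 = w i (Fin.last (k i)))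
    (htwice : ∀ q₀, 2 ≤ Nat.card {q // traversedEdge w q = traversedEdge w q₀})
    (hshare : ∀ i, ∃ j, j ≠ i ∧ ∃ m m', traversedEdge w ⟨i, m⟩ = traversedEdge w ⟨j, m'⟩) :
    2 * Nat.card V + Nat.card ι ≤
      2 * Nat.card (traversedGraph w).ConnectedComponent + ∑ i, k i := by
  obtain ⟨F, hle, hF, hreach⟩ := (traversedGraph w).exists_isAcyclic_reachable_eq_le
  have hcomponents :
      Nat.card F.ConnectedComponent = Nat.card (traversedGraph w).ConnectedComponent := by
    simp only [SimpleGraph.ConnectedComponent, hreach]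
  have hvert := card_vert_le_card_connectedComponent_add_card_edgeSet F
  have hedge := two_mul_card_edgeSet_add_card_le hle hF hclosed htwice hshare
  lia

end WalkFamily

theorem stmt_9 (p : ℕ) (hp : 1 ≤ p) (k : Fin p → ℕ) (hk : ∀ ℓ, 1 ≤ k ℓ)
    (π : Setoid (WalkIndex p k))
    -- (i) each walk starts and ends at the same vertex
    (h1 : ∀ ℓ : Fin p,
      Quotient.mk π (⟨ℓ, 0⟩ : WalkIndex p k) = Quotient.mk π ⟨ℓ, Fin.last (k ℓ)⟩)
    -- (ii) every edge of `G_π` is traversed at least twice in total by the `p` walks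
    (h2 : ∀ q₀ : WalkStep p k, 2 ≤ Nat.card {q : WalkStep p k // stepEdge π q = stepEdge π q₀})
    -- (iii) every walk shares an edge with some other walk
    (h3 : ∀ ℓ : Fin p, ∃ ℓ' : Fin p, ℓ' ≠ ℓ ∧
      ∃ (m : Fin (k ℓ)) (m' : Fin (k ℓ')), stepEdge π ⟨ℓ, m⟩ = stepEdge π ⟨ℓ', m'⟩) :
    -- then `c_π ≤ p/2` and `|π| ≤ c_π - p/2 + (k₁ + ⋯ + k_p)/2`
    2 * Nat.card (Quotient (Relation.EqvGen.setoid (stepAdj π))) ≤ p ∧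
      2 * Nat.card (Quotient π) + p ≤
        2 * Nat.card (Quotient (Relation.EqvGen.setoid (stepAdj π))) + ∑ ℓ : Fin p, k ℓ := by
  let w (ℓ : Fin p) (m : Fin (k ℓ + 1)) : Quotient π := Quotient.mk π ⟨ℓ, m⟩
  have hcover : ∀ v, ∃ ℓ m, w ℓ m = v := by
    rintro ⟨ℓ, m⟩
    exact ⟨ℓ, m, rfl⟩
  have hcomponents : Nat.card (Quotient (Relation.EqvGen.setoid (stepAdj π))) =
      Nat.card (traversedGraph w).ConnectedComponent :=
    congrArg (fun r ↦ Nat.card (Quot r))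
      (eqvGen_toRel_eq_reachable_fromEdgeSet (Set.range (stepEdge π)))
  have hle := two_mul_card_connectedComponent_le hcover h3
  have hvert := two_mul_card_vert_add_card_le (w := w) h1 h2 h3
  rw [Nat.card_fin] at hle hvert
  rw [hcomponents]
  exact ⟨hle, hvert⟩
end

section
/- Fix an integer p ≥ 1, integers k₁, …, k_p ≥ 1, and reals s₁, …, s_p ∈ [0,1]. Let E be the disjoint union of the sets {0, 1, …, k_ℓ} for ℓ = 1, …, p, writing m̄^ℓ for the element m of the ℓ-th copy. Define s(m̄^ℓ) := s_ℓ if m ∈ {0, k_ℓ} and s(m̄^ℓ) := 1 otherwise. Let π be a partition of E such that 0̄^ℓ and k̄_ℓ^ℓ lie in the same block for every ℓ, and set s_π := ∏_{B block of π} min_{x ∈ B} s(x). For each n, let A(n, π) be the number of families (i_x)_{x ∈ E} ∈ {1, …, n}^E whose level-set partition (x ∼ y iff i_x = i_y) is exactly π and which satisfy 1 ≤ i_{0̄^ℓ} = i_{k̄_ℓ^ℓ} ≤ n s_ℓ for every ℓ = 1, …, p. Then A(n, π)/n^{|π|} → s_π as n → ∞, where |π| is the number of blocks of π. -/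
open Filter

/-- The weight `s(m̄^ℓ)`: equal to `s_ℓ` if `m ∈ {0, k_ℓ}` and to `1` otherwise. -/
noncomputable def sWeight {p : ℕ} {k : Fin p → ℕ} (s : Fin p → ℝ) (x : WalkIndex p k) : ℝ :=
  if x.2 = 0 ∨ x.2 = Fin.last (k x.1) then s x.1 else 1

/-- `A(n, π)`: the number of families `(i_x)_{x ∈ E} ∈ {1, …, n}^E` whose level-set
partition is exactly `π` and which satisfy `1 ≤ i_{0̄^ℓ} = i_{k̄_ℓ^ℓ} ≤ n s_ℓ` for all `ℓ`. -/
noncomputable def countA {p : ℕ} {k : Fin p → ℕ} (π : Setoid (WalkIndex p k))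
    (s : Fin p → ℝ) (n : ℕ) : ℕ :=
  Nat.card {i : WalkIndex p k → ℕ //
    (∀ x, i x ∈ Finset.Icc 1 n) ∧
    (∀ x y, i x = i y ↔ Quotient.mk π x = Quotient.mk π y) ∧
    (∀ ℓ : Fin p, ((i ⟨ℓ, 0⟩ : ℝ) ≤ n * s ℓ ∧
      i ⟨ℓ, 0⟩ = i ⟨ℓ, Fin.last (k ℓ)⟩))}

/-!
Families whose level sets are the blocks of `π` correspond to injective functions on the set of
blocks, and the upper bounds `i_x ≤ n s(x)` on a block `B` amount to the single bound `n min_B s`.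
Without injectivity there are `∏_B ⌊n min_B s⌋` such functions. Those taking equal values at two
given blocks have one degree of freedom less, hence number `O(n^{|π| - 1})`, and there are finitely
many pairs of blocks.
-/

open Finset Topology

section InjectiveFamilies

variable {ι α κ : Type*} [Fintype ι] [DecidableEq ι]
  {l : Filter κ} {r : κ → ℝ} {A : κ → ι → Finset α} {c : ι → ℝ}

lemma tendsto_card_piFinset_div_pow
    (hA : ∀ x, Tendsto (fun t ↦ (#(A t x) : ℝ) / r t) l (𝓝 (c x))) :
    Tendsto (fun t ↦ (#(Fintype.piFinset (A t)) : ℝ) / r t ^ Fintype.card ι) l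
      (𝓝 (∏ x, c x)) := by
  refine (tendsto_finsetProd univ fun x _ ↦ hA x).congr fun t ↦ ?_
  simp [prod_div_distrib]

variable [DecidableEq α]

lemma card_filter_piFinset_apply_eq_apply_le (S : ι → Finset α) {a b : ι} (hab : a ≠ b) :
    #{f ∈ Fintype.piFinset S | f a = f b} ≤ ∏ x ∈ univ.erase a, #(S x) := by
  rw [← card_pi]
  refine card_le_card_of_injOn (fun f x _ ↦ f x) (fun f hf ↦ ?_) fun f hf g hg hfg ↦ ?_
  · simp_all
  · simp only [coe_filter, Set.mem_ofPred_eq] at hf hg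
    have eq_of_ne (x : ι) (hx : x ≠ a) : f x = g x :=
      congrFun₂ hfg x (mem_erase.2 ⟨hx, mem_univ x⟩)
    funext x
    obtain rfl | hx := eq_or_ne x a
    · rw [hf.2, hg.2, eq_of_ne b hab.symm]
    · exact eq_of_ne x hx

lemma card_filter_piFinset_not_injective_le (S : ι → Finset α) :
    #{f ∈ Fintype.piFinset S | ¬ Function.Injective f} ≤
      ∑ q ∈ univ.offDiag, ∏ x ∈ univ.erase q.1, #(S x) := by
  have subset_collisions : {f ∈ Fintype.piFinset S | ¬ Function.Injective f} ⊆
      univ.offDiag.biUnion fun q ↦ {f ∈ Fintype.piFinset S | f q.1 = f q.2} := by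
    intro f hf
    obtain ⟨hfS, hf⟩ := mem_filter.1 hf
    obtain ⟨a, b, hfab, hab⟩ := Function.not_injective_iff.1 hf
    exact mem_biUnion.2 ⟨(a, b), by simpa using hab, mem_filter.2 ⟨hfS, hfab⟩⟩
  calc #{f ∈ Fintype.piFinset S | ¬ Function.Injective f}
      ≤ ∑ q ∈ univ.offDiag, #{f ∈ Fintype.piFinset S | f q.1 = f q.2} :=
        (card_le_card subset_collisions).trans card_biUnion_le
    _ ≤ ∑ q ∈ univ.offDiag, ∏ x ∈ univ.erase q.1, #(S x) :=
        sum_le_sum fun q hq ↦ card_filter_piFinset_apply_eq_apply_le S (mem_offDiag.1 hq).2.2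

lemma tendsto_card_filter_piFinset_not_injective_div_pow (hr : Tendsto r l atTop)
    (hA : ∀ x, Tendsto (fun t ↦ (#(A t x) : ℝ) / r t) l (𝓝 (c x))) :
    Tendsto (fun t ↦ (#{f ∈ Fintype.piFinset (A t) | ¬ Function.Injective f} : ℝ) /
      r t ^ Fintype.card ι) l (𝓝 0) := by
  have collisions_tendsto_zero (a : ι) :
      Tendsto (fun t ↦ (∏ x ∈ univ.erase a, (#(A t x) : ℝ)) / r t ^ Fintype.card ι) l (𝓝 0) := by
    have tendsto_prod_mul_inv := (tendsto_finsetProd (univ.erase a) fun x _ ↦ hA x).mul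
      hr.inv_tendsto_atTop
    rw [mul_zero] at tendsto_prod_mul_inv
    refine tendsto_prod_mul_inv.congr fun t ↦ ?_
    rw [prod_div_distrib, prod_const, Pi.inv_apply, ← div_eq_mul_inv, div_div, ← pow_succ,
      card_erase_add_one (mem_univ a), card_univ]
  have sum_tendsto_zero := tendsto_finsetSum univ.offDiag fun (q : ι × ι) _ ↦
    collisions_tendsto_zero q.1
  rw [sum_const_zero] at sum_tendsto_zero
  refine squeeze_zero' ?_ ?_ sum_tendsto_zero
  · filter_upwards [hr.eventually_ge_atTop 0] with t ht using by positivity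
  · filter_upwards [hr.eventually_ge_atTop 0] with t ht
    rw [← sum_div]
    gcongr
    exact_mod_cast card_filter_piFinset_not_injective_le (A t)

lemma tendsto_card_filter_piFinset_injective_div_pow (hr : Tendsto r l atTop)
    (hA : ∀ x, Tendsto (fun t ↦ (#(A t x) : ℝ) / r t) l (𝓝 (c x))) :
    Tendsto (fun t ↦ (#{f ∈ Fintype.piFinset (A t) | Function.Injective f} : ℝ) /
      r t ^ Fintype.card ι) l (𝓝 (∏ x, c x)) := by
  have tendsto_sub := (tendsto_card_piFinset_div_pow hA).sub
    (tendsto_card_filter_piFinset_not_injective_div_pow hr hA)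
  rw [sub_zero] at tendsto_sub
  refine tendsto_sub.congr fun t ↦ ?_
  rw [← sub_div, ← card_filter_add_card_filter_not (s := Fintype.piFinset (A t))
    Function.Injective, Nat.cast_add, add_sub_cancel_right]

end InjectiveFamilies

section KernelPartition

variable {E : Type*} {π : Setoid E}

lemma card_ker_eq_and_eq_card_injective_and (π : Setoid E) {α : Type*} (P : (E → α) → Prop) :
    Nat.card {i : E → α // Setoid.ker i = π ∧ P i} =
      Nat.card {j : Quotient π → α // Function.Injective j ∧ P (j ∘ Quotient.mk π)} := by
  have ker_comp_mk {j : Quotient π → α} (hj : Function.Injective j) :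
      Setoid.ker (j ∘ Quotient.mk π) = π :=
    Setoid.ext fun x y ↦ hj.eq_iff.trans Quotient.eq
  refine (Nat.card_eq_of_bijective (fun j ↦ ⟨j.1 ∘ Quotient.mk π, ker_comp_mk j.2.1, j.2.2⟩)
    ⟨fun j j' h ↦ ?_, ?_⟩).symm
  · exact Subtype.ext (Quotient.mk_surjective.injective_comp_right (congrArg Subtype.val h))
  · rintro ⟨i, rfl, hi⟩
    exact ⟨⟨Quotient.lift i fun _ _ h ↦ h, Setoid.kerLift_injective i, hi⟩, rfl⟩

/-- The minimum of the weight `w` over the block `b` of `π`, the factor of `b` in the product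
`s_π`. It is written as an infimum, which is attained when `E` is finite. -/
noncomputable def blockMin (π : Setoid E) (w : E → ℝ) (b : Quotient π) : ℝ :=
  sInf (w '' {x | Quotient.mk π x = b})

variable [Finite E]

lemma le_blockMin_iff {w : E → ℝ} {b : Quotient π} {t : ℝ} :
    t ≤ blockMin π w b ↔ ∀ x, Quotient.mk π x = b → t ≤ w x := by
  have block_nonempty : {x | Quotient.mk π x = b}.Nonempty := Quotient.exists_rep b
  rw [blockMin, le_csInf_iff (Set.toFinite _).bddBelow (block_nonempty.image w),
    Set.forall_mem_image]
  rfl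

lemma mem_Icc_one_floor_blockMin_mul_iff {w : E → ℝ} {b : Quotient π} {m n : ℕ} (hn : 0 < n) :
    m ∈ Icc 1 ⌊blockMin π w b * n⌋₊ ↔
      1 ≤ m ∧ ∀ x, Quotient.mk π x = b → (m : ℝ) ≤ n * w x := by
  rw [mem_Icc]
  refine and_congr_right fun hm ↦ ?_
  have hn : (0 : ℝ) < n := Nat.cast_pos.2 hn
  simp only [Nat.le_floor_iff' (Nat.one_le_iff_ne_zero.1 hm), ← div_le_iff₀ hn, ← div_le_iff₀' hn,
    le_blockMin_iff]

lemma tendsto_card_ker_eq_div_pow (π : Setoid E) {w : E → ℝ} (hw : ∀ x, 0 ≤ w x) :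
    Tendsto (fun n : ℕ ↦ (Nat.card {i : E → ℕ //
        Setoid.ker i = π ∧ ∀ x, 1 ≤ i x ∧ (i x : ℝ) ≤ n * w x} : ℝ) / n ^ Nat.card (Quotient π))
      atTop (𝓝 (∏ᶠ b, blockMin π w b)) := by
  classical
  have := Fintype.ofFinite (Quotient π)
  have blockMin_nonneg (b : Quotient π) : 0 ≤ blockMin π w b :=
    le_blockMin_iff.2 fun x _ ↦ hw x
  have card_Icc_tendsto (b : Quotient π) :
      Tendsto (fun n : ℕ ↦ (#(Icc 1 ⌊blockMin π w b * n⌋₊) : ℝ) / n) atTop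
        (𝓝 (blockMin π w b)) := by
    simpa [Function.comp_def] using (tendsto_nat_floor_mul_div_atTop (blockMin_nonneg b)).comp
      tendsto_natCast_atTop_atTop
  rw [finprod_eq_prod_of_fintype, Nat.card_eq_fintype_card]
  refine (tendsto_card_filter_piFinset_injective_div_pow tendsto_natCast_atTop_atTop
    card_Icc_tendsto).congr' ?_
  filter_upwards [eventually_gt_atTop 0] with n hn
  rw [card_ker_eq_and_eq_card_injective_and]
  congr 2
  refine (Nat.subtype_card _ fun j ↦ ?_).symm
  rw [mem_filter, and_comm, Fintype.mem_piFinset]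
  simp only [mem_Icc_one_floor_blockMin_mul_iff hn]
  refine and_congr_right fun _ ↦ ⟨fun h x ↦ ⟨(h _).1, (h _).2 x rfl⟩, fun h ↦ ?_⟩
  exact Quotient.ind fun x ↦ ⟨(h x).1, fun y hy ↦ hy ▸ (h y).2⟩

end KernelPartition

section WalkIndex

variable {p : ℕ} {k : Fin p → ℕ} {s : Fin p → ℝ}

lemma sWeight_nonneg (hs : ∀ ℓ, 0 ≤ s ℓ) (x : WalkIndex p k) : 0 ≤ sWeight s x := by
  unfold sWeight
  split_ifs
  exacts [hs x.1, zero_le_one]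

lemma forall_le_mul_sWeight_iff (hs : ∀ ℓ, s ℓ ≤ 1) {f : WalkIndex p k → ℝ}
    (hf : ∀ ℓ, f ⟨ℓ, 0⟩ = f ⟨ℓ, Fin.last (k ℓ)⟩) {t : ℝ} (ht : 0 ≤ t) :
    (∀ x, f x ≤ t * sWeight s x) ↔ (∀ x, f x ≤ t) ∧ ∀ ℓ, f ⟨ℓ, 0⟩ ≤ t * s ℓ := by
  constructor
  · intro h
    have sWeight_le_one (x : WalkIndex p k) : sWeight s x ≤ 1 := by
      unfold sWeight
      split_ifs
      exacts [hs x.1, le_rfl]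
    exact ⟨fun x ↦ (h x).trans (mul_le_of_le_one_right ht (sWeight_le_one x)),
      fun ℓ ↦ by simpa [sWeight] using h ⟨ℓ, 0⟩⟩
  · rintro ⟨le_t, le_mul_s⟩ ⟨ℓ, m⟩
    by_cases hm : m = 0 ∨ m = Fin.last (k ℓ)
    · rw [sWeight, if_pos hm]
      obtain rfl | rfl := hm
      exacts [le_mul_s ℓ, hf ℓ ▸ le_mul_s ℓ]
    · rw [sWeight, if_neg hm, mul_one]
      exact le_t ⟨ℓ, m⟩

lemma countA_eq_card_ker_eq (hs : ∀ ℓ, s ℓ ≤ 1) {π : Setoid (WalkIndex p k)}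
    (hπ : ∀ ℓ, Quotient.mk π ⟨ℓ, 0⟩ = Quotient.mk π ⟨ℓ, Fin.last (k ℓ)⟩) (n : ℕ) :
    countA π s n = Nat.card {i : WalkIndex p k → ℕ //
      Setoid.ker i = π ∧ ∀ x, 1 ≤ i x ∧ (i x : ℝ) ≤ n * sWeight s x} := by
  refine Nat.card_congr (Equiv.subtypeEquivRight fun i ↦ ?_)
  have ker_eq_iff : Setoid.ker i = π ↔
      ∀ x y, i x = i y ↔ Quotient.mk π x = Quotient.mk π y := by
    simp only [Setoid.ext_iff, Setoid.ker_def, Quotient.eq]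
  rw [← ker_eq_iff, and_left_comm]
  refine and_congr_right fun hi ↦ ?_
  have endpoints_eq (ℓ : Fin p) : i ⟨ℓ, 0⟩ = i ⟨ℓ, Fin.last (k ℓ)⟩ :=
    (ker_eq_iff.1 hi _ _).2 (hπ ℓ)
  have le_mul_sWeight_iff := forall_le_mul_sWeight_iff (f := fun x ↦ (i x : ℝ)) hs
    (fun ℓ ↦ congrArg Nat.cast (endpoints_eq ℓ)) n.cast_nonneg
  simp only [mem_Icc, forall_and, le_mul_sWeight_iff, endpoints_eq, and_true,
    Nat.cast_le, and_assoc]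

end WalkIndex

theorem stmt_10 (p : ℕ) (hp : 1 ≤ p) (k : Fin p → ℕ) (hk : ∀ ℓ, 1 ≤ k ℓ)
    (s : Fin p → ℝ) (hs : ∀ ℓ, s ℓ ∈ Set.Icc (0 : ℝ) 1)
    (π : Setoid (WalkIndex p k))
    -- `0̄^ℓ` and `k̄_ℓ^ℓ` lie in the same block of `π` for every `ℓ`
    (h1 : ∀ ℓ : Fin p,
      Quotient.mk π (⟨ℓ, 0⟩ : WalkIndex p k) = Quotient.mk π ⟨ℓ, Fin.last (k ℓ)⟩) :
    -- `A(n, π) / n^{|π|}` converges to `s_π = ∏_{B block of π} min_{x ∈ B} s(x)`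
    Tendsto
      (fun n : ℕ => (countA π s n : ℝ) / (n : ℝ) ^ (Nat.card (Quotient π)))
      atTop
      (nhds (∏ᶠ b : Quotient π,
        sInf (sWeight s '' {x : WalkIndex p k | Quotient.mk π x = b}))) := by
  simp only [countA_eq_card_ker_eq (fun ℓ ↦ (hs ℓ).2) h1]
  exact tendsto_card_ker_eq_div_pow π (sWeight_nonneg fun ℓ ↦ (hs ℓ).1)
end

section
/- There exists a constant C < ∞ such that for every n ≥ 2, if U = [u_{i,j}]_{i,j=1}^n is a Haar-distributed random matrix on the unitary group U(n), then for all subsets I, J ⊆ {1, …, n}, E[ ( ∑_{i ∈ I, j ∈ J} (|u_{i,j}|² − 1/n) )² ] ≤ C |I| |J| / n². -/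
open MeasureTheory

/-- The Borel measurable structure on matrices (entrywise). -/
noncomputable instance matrixMeasurableSpace (n : ℕ) :
    MeasurableSpace (Matrix (Fin n) (Fin n) ℂ) :=
  inferInstanceAs (MeasurableSpace (Fin n → Fin n → ℂ))

open Matrix

/-!
Let `P` be the coordinate projection onto `J` and `Q = U P Uᴴ`, so that
`∑_{i ∈ I, j ∈ J} |u_{i,j}|² = ∑_{i ∈ I} Q_{ii}`. For every matrix `P`, left invariance makes
`x ↦ E[(x Q xᴴ)²]` proportional to `|x|⁴`, and polarizing over the vectors `e_i + w e_k` with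
`w⁴ = 1` gives `E[Q_{ii} Q_{kk}] + E[Q_{ik} Q_{ki}] = E[Q_{ii}²]` for `i ≠ k`. Together with
`∑_{i,k} Q_{ii} Q_{kk} = (tr P)²`, `∑_{i,k} Q_{ik} Q_{ki} = tr P²` and the invariance under
permutation matrices, this determines every `E[Q_{ii} Q_{kk}]`. The second moment in question
is therefore exactly `|I| (n - |I|) |J| (n - |J|) / (n² (n² - 1))`.
-/

theorem sum_sum_eq_of_diag_of_offDiag {ι R : Type*} [CommRing R] (s : Finset ι)
    {M : ι → ι → R} {a b : R} (hdiag : ∀ i ∈ s, M i i = a)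
    (hoff : ∀ i ∈ s, ∀ k ∈ s, i ≠ k → M i k = b) :
    ∑ i ∈ s, ∑ k ∈ s, M i k = s.card * a + s.card * (s.card - 1) * b := by
  classical
  have hM : ∀ i ∈ s, ∀ k ∈ s, M i k = b + if i = k then a - b else 0 := by
    intro i hi k hk
    split_ifs with hik
    · rw [← hik, hdiag i hi, add_sub_cancel]
    · rw [hoff i hi k hk hik, add_zero]
  rw [Finset.sum_congr rfl fun i hi ↦ Finset.sum_congr rfl (hM i hi)]
  simp only [Finset.sum_add_distrib, Finset.sum_const, nsmul_eq_mul, Finset.sum_ite_eq,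
    Finset.sum_ite_mem, Finset.inter_self]
  ring

theorem card_sq_sub_one_ne_zero (ι R : Type*) [Fintype ι] [Nontrivial ι] [Ring R] [CharZero R] :
    (Fintype.card ι : R) ^ 2 - 1 ≠ 0 := by
  rw [sub_ne_zero]
  exact_mod_cast (Nat.one_lt_pow two_ne_zero (Fintype.one_lt_card (α := ι))).ne'

theorem quadForm_single_add_smul_single {ι R : Type*} [Fintype ι] [DecidableEq ι] [CommRing R]
    [StarRing R] (Q : Matrix ι ι R) (i k : ι) (w : R) :
    (Pi.single i 1 + w • Pi.single k 1) ⬝ᵥ Q *ᵥ star (Pi.single i 1 + w • Pi.single k 1)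
      = Q i i + w * star w * Q k k + w * Q k i + star w * Q i k := by
  have hsingle (j : ι) : star (Pi.single j 1 : ι → R) = Pi.single j 1 := by
    rw [← Pi.single_star, star_one]
  simp only [star_add, star_smul, hsingle, mulVec_add, mulVec_smul, add_dotProduct,
    dotProduct_add, smul_dotProduct, dotProduct_smul, mulVec_single_one, single_one_dotProduct,
    col_apply, smul_eq_mul]
  ring

theorem quadForm_single_add_I_pow_smul_single {ι : Type*} [Fintype ι] [DecidableEq ι]
    (Q : Matrix ι ι ℂ) (i k : ι) (m : ℕ) :
    (Pi.single i 1 + Complex.I ^ m • Pi.single k 1) ⬝ᵥ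
        Q *ᵥ star (Pi.single i 1 + Complex.I ^ m • Pi.single k 1)
      = (Q i i + Q k k) + Complex.I ^ m * Q k i + star (Complex.I ^ m) * Q i k := by
  have hunit : Complex.I ^ m * star (Complex.I ^ m) = 1 := by simp [← mul_pow]
  rw [quadForm_single_add_smul_single, hunit, one_mul]

theorem sum_range_four_sq_I_pow (p r s : ℂ) :
    ∑ m ∈ Finset.range 4, (p + Complex.I ^ m * r + star (Complex.I ^ m) * s) ^ 2
      = 4 * p ^ 2 + 8 * (r * s) := by
  simp only [Finset.sum_range_succ, Finset.sum_range_zero, pow_zero, pow_one, Complex.I_sq,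
    Complex.I_pow_three, Complex.star_def, Complex.conj_I, map_neg, map_one]
  linear_combination 2 * (r - s) ^ 2 * Complex.I_sq

theorem sum_range_four_quadForm_sq {ι : Type*} [Fintype ι] [DecidableEq ι]
    (Q : Matrix ι ι ℂ) (i k : ι) :
    ∑ m ∈ Finset.range 4, ((Pi.single i 1 + Complex.I ^ m • Pi.single k 1) ⬝ᵥ
        Q *ᵥ star (Pi.single i 1 + Complex.I ^ m • Pi.single k 1)) ^ 2
      = 4 * (Q i i ^ 2 + Q k k ^ 2) + 8 * (Q i i * Q k k + Q i k * Q k i) := by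
  simp only [quadForm_single_add_I_pow_smul_single, sum_range_four_sq_I_pow]
  ring

theorem integral_sum_sum {Ω ι κ E : Type*} [MeasurableSpace Ω] {μ : Measure Ω}
    [NormedAddCommGroup E] [NormedSpace ℝ E] (s : Finset ι) (t : Finset κ) {f : ι → κ → Ω → E}
    (hf : ∀ i k, Integrable (f i k) μ) :
    ∫ ω, ∑ i ∈ s, ∑ k ∈ t, f i k ω ∂μ = ∑ i ∈ s, ∑ k ∈ t, ∫ ω, f i k ω ∂μ := by
  rw [integral_finsetSum s fun i _ ↦ integrable_finsetSum t fun k _ ↦ hf i k]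
  exact Finset.sum_congr rfl fun i _ ↦ integral_finsetSum t fun k _ ↦ hf i k

theorem integrable_of_continuous {X E : Type*} [TopologicalSpace X] [CompactSpace X]
    [MeasurableSpace X] [OpensMeasurableSpace X] {μ : Measure X} [IsFiniteMeasure μ]
    [NormedAddCommGroup E] {f : X → E} (hf : Continuous f) : Integrable f μ :=
  hf.integrable_of_hasCompactSupport (.of_compactSpace f)

section UnitaryGroup

variable {ι 𝕜 : Type*} [Fintype ι] [DecidableEq ι] [RCLike 𝕜]

instance compactSpace_unitaryGroup : CompactSpace (unitaryGroup ι 𝕜) := by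
  let entriesLeOne : Set (Matrix ι ι 𝕜) :=
    Set.univ.pi fun _ ↦ Set.univ.pi fun _ ↦ Metric.closedBall 0 1
  have hcompact : IsCompact entriesLeOne :=
    isCompact_univ_pi fun _ ↦ isCompact_univ_pi fun _ ↦ isCompact_closedBall 0 1
  have hclosed : IsClosed (unitaryGroup ι 𝕜 : Set (Matrix ι ι 𝕜)) := isClosed_unitary
  refine isCompact_iff_compactSpace.1 (hcompact.of_isClosed_subset hclosed fun U hU i _ j _ ↦ ?_)
  exact mem_closedBall_zero_iff.2 (entry_norm_bound_of_unitary hU i j)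

theorem exists_unitaryGroup_row_eq {x : EuclideanSpace 𝕜 ι} (hx : ‖x‖ = 1) (i : ι) :
    ∃ V : unitaryGroup ι 𝕜, V.1 i = x.ofLp := by
  have hon : Orthonormal 𝕜 (({i} : Set ι).domRestrict fun _ ↦ x) :=
    ⟨fun _ ↦ hx, fun a b hab ↦ (hab (Subsingleton.elim a b)).elim⟩
  obtain ⟨b, hb⟩ := hon.exists_orthonormalBasis_extension_of_card_eq finrank_euclideanSpace
  have hV := (EuclideanSpace.basisFun ι 𝕜).toMatrix_orthonormalBasis_mem_unitary b
  refine ⟨⟨_, transpose_mem_unitaryGroup_iff.2 hV⟩, funext fun j ↦ ?_⟩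
  simp [Module.Basis.toMatrix_apply, hb]

theorem exists_unitaryGroup_eq_smul_row (x : ι → 𝕜) (i : ι) :
    ∃ (V : unitaryGroup ι 𝕜) (c : 𝕜), x = c • V.1 i := by
  rcases eq_or_ne x 0 with rfl | hx
  · exact ⟨1, 0, by rw [zero_smul]⟩
  · have hx' : WithLp.toLp 2 x ≠ 0 := by simpa using hx
    obtain ⟨V, hV⟩ := exists_unitaryGroup_row_eq (norm_smul_inv_norm (𝕜 := 𝕜) hx') i
    refine ⟨V, ‖WithLp.toLp 2 x‖, ?_⟩
    rw [hV, WithLp.ofLp_smul, smul_inv_smul₀ (by simpa using hx)]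

end UnitaryGroup

section Conjugation

local notation "Ad[" R "]" => Unitary.conjStarAlgAut R (Matrix _ _ R)

variable {ι : Type*} [Fintype ι] [DecidableEq ι]

section CommRing

variable {R : Type*} [CommRing R] [StarRing R]

theorem trace_conjStarAlgAut (A : Matrix ι ι R) (U : unitaryGroup ι R) :
    (Ad[R] U A).trace = A.trace := by
  rw [Unitary.conjStarAlgAut_apply, trace_mul_cycle, Unitary.coe_star_mul_self, Matrix.one_mul]

theorem conjStarAlgAut_apply_self (A : Matrix ι ι R) (U : unitaryGroup ι R) (i : ι) :
    Ad[R] U A i i = U.1 i ⬝ᵥ A *ᵥ star (U.1 i) := by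
  rw [Unitary.conjStarAlgAut_apply, Matrix.mul_assoc]
  rfl

theorem permMatrix_mem_unitaryGroup (σ : Equiv.Perm ι) : σ.permMatrix R ∈ unitaryGroup ι R := by
  rw [mem_unitaryGroup_iff, star_eq_conjTranspose, conjTranspose_permMatrix, ← permMatrix_mul,
    inv_mul_cancel, permMatrix_one]

theorem conjStarAlgAut_permMatrix (A : Matrix ι ι R) (σ : Equiv.Perm ι) :
    Ad[R] ⟨σ.permMatrix R, permMatrix_mem_unitaryGroup σ⟩ A = A.submatrix σ σ := by
  rw [Unitary.conjStarAlgAut_apply]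
  change σ.permMatrix R * A * (σ.permMatrix R)ᴴ = _
  rw [conjTranspose_permMatrix, PEquiv.toMatrix_toPEquiv_mul, PEquiv.mul_toMatrix_toPEquiv,
    submatrix_submatrix]
  rfl

theorem sum_sum_conjStarAlgAut_diag (A : Matrix ι ι R) (U : unitaryGroup ι R) :
    ∑ i, ∑ k, Ad[R] U A i i * Ad[R] U A k k = A.trace ^ 2 := by
  rw [← Finset.sum_mul_sum, ← trace_conjStarAlgAut A U, sq]
  rfl

theorem sum_sum_conjStarAlgAut_mul_swap (A : Matrix ι ι R) (U : unitaryGroup ι R) :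
    ∑ i, ∑ k, Ad[R] U A i k * Ad[R] U A k i = (A * A).trace := by
  rw [← trace_conjStarAlgAut (A * A) U, map_mul]
  rfl

end CommRing

section RCLike

variable {𝕜 : Type*} [RCLike 𝕜]

theorem conjStarAlgAut_diagonal_apply_self (d : ι → 𝕜) (U : unitaryGroup ι 𝕜) (i : ι) :
    Ad[𝕜] U (diagonal d) i i = ∑ j, d j * ‖U.1 i j‖ ^ 2 := by
  rw [conjStarAlgAut_apply_self]
  refine Finset.sum_congr rfl fun j _ ↦ ?_
  rw [mulVec_diagonal, Pi.star_apply, mul_left_comm, RCLike.star_def, RCLike.mul_conj]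

@[fun_prop]
theorem continuous_conjStarAlgAut_apply (A : Matrix ι ι 𝕜) (i k : ι) :
    Continuous fun U : unitaryGroup ι 𝕜 ↦ Ad[𝕜] U A i k := by
  simp only [Unitary.conjStarAlgAut_apply]
  fun_prop

variable [MeasurableSpace (unitaryGroup ι 𝕜)] [BorelSpace (unitaryGroup ι 𝕜)]
  (μ : Measure (unitaryGroup ι 𝕜)) [μ.IsMulLeftInvariant]

theorem integral_conjStarAlgAut_conjStarAlgAut {E : Type*} [NormedAddCommGroup E]
    [NormedSpace ℝ E] (f : Matrix ι ι 𝕜 → E) (A : Matrix ι ι 𝕜) (V : unitaryGroup ι 𝕜) :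
    ∫ U, f (Ad[𝕜] V (Ad[𝕜] U A)) ∂μ = ∫ U, f (Ad[𝕜] U A) ∂μ := by
  simp only [← Unitary.conjStarAlgAut_mul_apply]
  exact integral_mul_left_eq_self (fun U ↦ f (Ad[𝕜] U A)) V

theorem integral_conj_diag_mul_diag_perm (A : Matrix ι ι 𝕜) (σ : Equiv.Perm ι) (i k : ι) :
    ∫ U, Ad[𝕜] U A (σ i) (σ i) * Ad[𝕜] U A (σ k) (σ k) ∂μ
      = ∫ U, Ad[𝕜] U A i i * Ad[𝕜] U A k k ∂μ := by
  rw [← integral_conjStarAlgAut_conjStarAlgAut μ (fun Q ↦ Q i i * Q k k) A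
    ⟨σ.permMatrix 𝕜, permMatrix_mem_unitaryGroup σ⟩]
  simp only [conjStarAlgAut_permMatrix, submatrix_apply]

theorem integral_conj_diag_sq_eq (A : Matrix ι ι 𝕜) (i k : ι) :
    ∫ U, Ad[𝕜] U A i i ^ 2 ∂μ = ∫ U, Ad[𝕜] U A k k ^ 2 ∂μ := by
  simpa [sq] using integral_conj_diag_mul_diag_perm μ A (Equiv.swap i k) k k

theorem integral_conj_diag_mul_diag_eq (A : Matrix ι ι 𝕜) {i k i' k' : ι} (hik : i ≠ k)
    (hik' : i' ≠ k') :
    ∫ U, Ad[𝕜] U A i i * Ad[𝕜] U A k k ∂μ = ∫ U, Ad[𝕜] U A i' i' * Ad[𝕜] U A k' k' ∂μ := by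
  obtain ⟨σ, rfl, rfl⟩ := MulAction.is_two_pretransitive_iff.1
    (Equiv.Perm.isMultiplyPretransitive ι 2) hik' hik
  exact integral_conj_diag_mul_diag_perm μ A σ i' k'

theorem integral_quadForm_conj_sq (A : Matrix ι ι 𝕜) (x : ι → 𝕜) (i : ι) :
    ∫ U, (x ⬝ᵥ Ad[𝕜] U A *ᵥ star x) ^ 2 ∂μ = (x ⬝ᵥ star x) ^ 2 * ∫ U, Ad[𝕜] U A i i ^ 2 ∂μ := by
  obtain ⟨V, c, rfl⟩ := exists_unitaryGroup_eq_smul_row x i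
  have hform (Q : Matrix ι ι 𝕜) :
      (c • V.1 i) ⬝ᵥ Q *ᵥ star (c • V.1 i) = c * star c * Ad[𝕜] V Q i i := by
    rw [conjStarAlgAut_apply_self, star_smul, mulVec_smul, smul_dotProduct, dotProduct_smul,
      smul_smul, smul_eq_mul]
  have hnorm : (c • V.1 i) ⬝ᵥ star (c • V.1 i) = c * star c := by
    simpa [mul_assoc] using hform 1
  simp only [hform, hnorm, mul_pow (c * star c)]
  rw [integral_const_mul, integral_conjStarAlgAut_conjStarAlgAut μ (fun Q ↦ Q i i ^ 2)]

end RCLike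

section Complex

variable [MeasurableSpace (unitaryGroup ι ℂ)] [BorelSpace (unitaryGroup ι ℂ)]
  (μ : Measure (unitaryGroup ι ℂ)) [μ.IsMulLeftInvariant]

theorem integral_conj_diag_mul_diag_add_integral_mul_swap [IsFiniteMeasure μ] (A : Matrix ι ι ℂ)
    {i k : ι} (hik : i ≠ k) :
    ∫ U, Ad[ℂ] U A i i * Ad[ℂ] U A k k ∂μ + ∫ U, Ad[ℂ] U A i k * Ad[ℂ] U A k i ∂μ
      = ∫ U, Ad[ℂ] U A i i ^ 2 ∂μ := by
  let x (m : ℕ) : ι → ℂ := Pi.single i 1 + Complex.I ^ m • Pi.single k 1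
  have hnorm (m : ℕ) : x m ⬝ᵥ star (x m) = 2 := by
    simpa only [one_mulVec, one_apply_eq, one_apply_ne hik, one_apply_ne hik.symm, mul_zero,
      add_zero, one_add_one_eq_two] using
      quadForm_single_add_I_pow_smul_single 1 i k m
  have hmoments : 16 * ∫ U, Ad[ℂ] U A i i ^ 2 ∂μ
      = 4 * (∫ U, Ad[ℂ] U A i i ^ 2 ∂μ + ∫ U, Ad[ℂ] U A k k ^ 2 ∂μ)
        + 8 * (∫ U, Ad[ℂ] U A i i * Ad[ℂ] U A k k ∂μ + ∫ U, Ad[ℂ] U A i k * Ad[ℂ] U A k i ∂μ) := by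
    calc 16 * ∫ U, Ad[ℂ] U A i i ^ 2 ∂μ
        = ∫ U, ∑ m ∈ Finset.range 4, (x m ⬝ᵥ Ad[ℂ] U A *ᵥ star (x m)) ^ 2 ∂μ := by
          rw [integral_finsetSum _ fun m _ ↦ integrable_of_continuous (by fun_prop)]
          simp only [integral_quadForm_conj_sq μ A _ i, hnorm, Finset.sum_const, Finset.card_range,
            nsmul_eq_mul]
          ring
      _ = _ := by
          simp only [x, sum_range_four_quadForm_sq]
          rw [integral_add, integral_const_mul, integral_const_mul, integral_add, integral_add] <;>
            exact integrable_of_continuous (by fun_prop)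
  rw [integral_conj_diag_sq_eq μ A k i] at hmoments
  linear_combination -hmoments / 8

variable [IsProbabilityMeasure μ]

theorem integral_conj_diag_sq (A : Matrix ι ι ℂ) (i : ι) :
    ∫ U, Ad[ℂ] U A i i ^ 2 ∂μ
      = (A.trace ^ 2 + (A * A).trace) / (Fintype.card ι * (Fintype.card ι + 1)) := by
  set a := ∫ U, Ad[ℂ] U A i i ^ 2 ∂μ
  have hdiag (j : ι) :
      ∫ U, Ad[ℂ] U A j j * Ad[ℂ] U A j j + Ad[ℂ] U A j j * Ad[ℂ] U A j j ∂μ = 2 * a := by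
    simp only [← sq, ← two_mul]
    rw [integral_const_mul, integral_conj_diag_sq_eq μ A j i]
  have hoff (j k : ι) (hjk : j ≠ k) :
      ∫ U, Ad[ℂ] U A j j * Ad[ℂ] U A k k + Ad[ℂ] U A j k * Ad[ℂ] U A k j ∂μ = a := by
    rw [integral_add (integrable_of_continuous (by fun_prop))
      (integrable_of_continuous (by fun_prop)),
      integral_conj_diag_mul_diag_add_integral_mul_swap μ A hjk, integral_conj_diag_sq_eq μ A j i]
  have hsum := sum_sum_eq_of_diag_of_offDiag Finset.univ (fun j _ ↦ hdiag j)
    fun j _ k _ ↦ hoff j k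
  rw [← integral_sum_sum _ _ fun _ _ ↦ integrable_of_continuous (by fun_prop)] at hsum
  simp only [Finset.sum_add_distrib, sum_sum_conjStarAlgAut_diag, sum_sum_conjStarAlgAut_mul_swap,
    integral_const, probReal_univ, one_smul, Finset.card_univ] at hsum
  have : Nonempty ι := ⟨i⟩
  have hcard : (Fintype.card ι : ℂ) ≠ 0 := Nat.cast_ne_zero.2 Fintype.card_ne_zero
  rw [eq_div_iff (mul_ne_zero hcard (Nat.cast_add_one_ne_zero _))]
  linear_combination -hsum

theorem integral_conj_diag_mul_diag (A : Matrix ι ι ℂ) {i k : ι} (hik : i ≠ k) :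
    ∫ U, Ad[ℂ] U A i i * Ad[ℂ] U A k k ∂μ
      = (Fintype.card ι * A.trace ^ 2 - (A * A).trace)
        / (Fintype.card ι * (Fintype.card ι ^ 2 - 1)) := by
  have hsum := sum_sum_eq_of_diag_of_offDiag (M := fun j l ↦ ∫ U, Ad[ℂ] U A j j * Ad[ℂ] U A l l ∂μ)
    Finset.univ (fun j _ ↦ by simpa only [sq] using integral_conj_diag_sq μ A j)
    fun j _ l _ hjl ↦ integral_conj_diag_mul_diag_eq μ A hjl hik
  rw [← integral_sum_sum _ _ fun _ _ ↦ integrable_of_continuous (by fun_prop)] at hsum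
  simp only [sum_sum_conjStarAlgAut_diag, integral_const, probReal_univ, one_smul,
    Finset.card_univ] at hsum
  have : Nontrivial ι := ⟨i, k, hik⟩
  have hcard : (Fintype.card ι : ℂ) ≠ 0 := Nat.cast_ne_zero.2 Fintype.card_ne_zero
  have hcard_add : (Fintype.card ι : ℂ) + 1 ≠ 0 := Nat.cast_add_one_ne_zero _
  have hcard_sq := card_sq_sub_one_ne_zero ι ℂ
  field_simp at hsum ⊢
  linear_combination -hsum

theorem integral_sq_sum_conj_diag [Nontrivial ι] (A : Matrix ι ι ℂ) (I : Finset ι) :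
    ∫ U, (∑ i ∈ I, Ad[ℂ] U A i i) ^ 2 ∂μ
      = I.card * ((Fintype.card ι * I.card - 1) * A.trace ^ 2
          + (Fintype.card ι - I.card) * (A * A).trace)
        / (Fintype.card ι * (Fintype.card ι ^ 2 - 1)) := by
  have hcard : (Fintype.card ι : ℂ) ≠ 0 := Nat.cast_ne_zero.2 Fintype.card_ne_zero
  have hcard_add : (Fintype.card ι : ℂ) + 1 ≠ 0 := Nat.cast_add_one_ne_zero _
  have hcard_sq := card_sq_sub_one_ne_zero ι ℂ
  simp only [sq (I.sum _), Finset.sum_mul_sum]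
  rw [integral_sum_sum _ _ fun _ _ ↦ integrable_of_continuous (by fun_prop),
    sum_sum_eq_of_diag_of_offDiag I
      (fun i _ ↦ by simpa only [sq] using integral_conj_diag_sq μ A i)
      fun _ _ _ _ ↦ integral_conj_diag_mul_diag μ A]
  field_simp
  ring

theorem integral_sq_sum_conj_diag_sub [Nontrivial ι] (A : Matrix ι ι ℂ) (I : Finset ι) :
    ∫ U, (∑ i ∈ I, (Ad[ℂ] U A i i - A.trace / Fintype.card ι)) ^ 2 ∂μ
      = I.card * (Fintype.card ι - I.card)
          * (Fintype.card ι * (A * A).trace - A.trace ^ 2)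
        / (Fintype.card ι ^ 2 * (Fintype.card ι ^ 2 - 1)) := by
  have hcard : (Fintype.card ι : ℂ) ≠ 0 := Nat.cast_ne_zero.2 Fintype.card_ne_zero
  have hcard_sq := card_sq_sub_one_ne_zero ι ℂ
  set c := A.trace / Fintype.card ι with hc
  set B := A - c • (1 : Matrix ι ι ℂ) with hB
  have hentry (U : unitaryGroup ι ℂ) (i : ι) : Ad[ℂ] U A i i - c = Ad[ℂ] U B i i := by
    simp [hB, map_sub, map_smul]
  have htrace : B.trace = 0 := by
    rw [hB, trace_sub, trace_smul, trace_one, smul_eq_mul, hc, div_mul_cancel₀ _ hcard, sub_self]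
  have htrace_sq : (B * B).trace = (A * A).trace - A.trace ^ 2 / Fintype.card ι := by
    simp only [hB, sub_mul, mul_sub, trace_sub, smul_mul_assoc, mul_smul_comm, Matrix.one_mul,
      Matrix.mul_one, trace_smul, trace_one, smul_eq_mul, hc]
    field_simp
    ring
  simp only [hentry]
  rw [integral_sq_sum_conj_diag, htrace, htrace_sq]
  field_simp
  ring

theorem integral_sq_sum_norm_sq_entry_sub [Nontrivial ι] (I J : Finset ι) :
    ∫ U : unitaryGroup ι ℂ, (∑ i ∈ I, ∑ j ∈ J, (‖U.1 i j‖ ^ 2 - 1 / Fintype.card ι : ℝ)) ^ 2 ∂μ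
      = I.card * (Fintype.card ι - I.card) * (J.card * (Fintype.card ι - J.card))
        / (Fintype.card ι ^ 2 * (Fintype.card ι ^ 2 - 1)) := by
  let P : Matrix ι ι ℂ := diagonal fun j ↦ if j ∈ J then 1 else 0
  have htrace : P.trace = J.card := by simp [P]
  have hidem : P * P = P := by simp [P]
  have hentry (U : unitaryGroup ι ℂ) (i : ι) :
      Ad[ℂ] U P i i - J.card / Fintype.card ι
        = ((∑ j ∈ J, (‖U.1 i j‖ ^ 2 - 1 / Fintype.card ι) : ℝ) : ℂ) := by
    rw [conjStarAlgAut_diagonal_apply_self]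
    simp [Finset.sum_sub_distrib, div_eq_mul_inv]
  have hvar := integral_sq_sum_conj_diag_sub μ P I
  simp only [hidem, htrace, hentry, ← Complex.ofReal_sum, ← Complex.ofReal_pow,
    integral_complex_ofReal] at hvar
  apply Complex.ofReal_injective
  rw [hvar]
  push_cast
  ring

end Complex

end Conjugation

theorem stmt_14_general {ι : Type*} [Fintype ι] [DecidableEq ι] [Nontrivial ι]
    [MeasurableSpace (unitaryGroup ι ℂ)] [BorelSpace (unitaryGroup ι ℂ)]
    (μ : Measure (unitaryGroup ι ℂ)) [μ.IsMulLeftInvariant] [IsProbabilityMeasure μ]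
    (I J : Finset ι) :
    ∫ U : unitaryGroup ι ℂ, (∑ i ∈ I, ∑ j ∈ J, (‖U.1 i j‖ ^ 2 - 1 / Fintype.card ι : ℝ)) ^ 2 ∂μ
      ≤ I.card * J.card / Fintype.card ι ^ 2 := by
  set N := (Fintype.card ι : ℝ)
  have hN : 1 < N := Nat.one_lt_cast.2 Fintype.one_lt_card
  have hN_sq : 0 < N ^ 2 - 1 := by nlinarith only [hN]
  have hcard_le (S : Finset ι) : (S.card : ℝ) ≤ N := Nat.cast_le.2 S.card_le_univ
  have hcard_mul_sub (S : Finset ι) : S.card * (N - S.card) ≤ S.card * (N - 1) := by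
    rcases S.card.eq_zero_or_pos with hS | hS
    · simp [hS]
    · gcongr
      exact_mod_cast hS
  calc ∫ U : unitaryGroup ι ℂ, (∑ i ∈ I, ∑ j ∈ J, (‖U.1 i j‖ ^ 2 - 1 / N)) ^ 2 ∂μ
      = I.card * (N - I.card) * (J.card * (N - J.card)) / (N ^ 2 * (N ^ 2 - 1)) :=
        integral_sq_sum_norm_sq_entry_sub μ I J
    _ ≤ I.card * (N - 1) * (J.card * (N - 1)) / (N ^ 2 * (N ^ 2 - 1)) := by
        have hJ : 0 ≤ N - J.card := sub_nonneg.2 (hcard_le J)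
        have hN' : 0 ≤ N - 1 := by linarith only [hN]
        gcongr ?_ / _
        exact mul_le_mul (hcard_mul_sub I) (hcard_mul_sub J) (by positivity) (by positivity)
    _ = I.card * J.card / N ^ 2 * ((N - 1) ^ 2 / (N ^ 2 - 1)) := by
        rw [div_mul_div_comm]
        ring
    _ ≤ I.card * J.card / N ^ 2 :=
        mul_le_of_le_one_right (by positivity) ((div_le_one hN_sq).2 (by linarith only [hN]))

/-- For `U = [u_{i,j}]` Haar-distributed on the unitary group `U(n)` (`n ≥ 2`), i.e.
distributed according to the unique left-invariant Borel probability measure, one has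
`E[(∑_{i ∈ I, j ∈ J} (|u_{i,j}|² - 1/n))²] ≤ C |I| |J| / n²` for a constant `C`
independent of everything. -/
theorem stmt_14 :
    ∃ C : ℝ, ∀ n : ℕ, 2 ≤ n →
      ∀ μ : Measure (Matrix.unitaryGroup (Fin n) ℂ), IsProbabilityMeasure μ →
        μ.IsMulLeftInvariant →
      ∀ I J : Finset (Fin n),
        (∫ U, (∑ i ∈ I, ∑ j ∈ J,
            (‖(U : Matrix (Fin n) (Fin n) ℂ) i j‖ ^ 2 - 1 / n)) ^ 2 ∂μ)
          ≤ C * I.card * J.card / n ^ 2 := by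
  refine ⟨1, fun n hn μ _ _ I J ↦ ?_⟩
  have : Nontrivial (Fin n) := Fin.nontrivial_iff_two_le.2 hn
  have : BorelSpace (Matrix (Fin n) (Fin n) ℂ) := inferInstanceAs (BorelSpace (Fin n → Fin n → ℂ))
  simpa only [Fintype.card_fin, one_mul] using stmt_14_general μ I J
end
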